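/- Let N ≥ 20 and let C = {x_1,…,x_M} ⊂ SO(3) be pairwise distinct points with min_{x_i ≠ x_j} ω(x_j⁻¹x_i) ≥ 36/(N+1). Then, taking s = 8 in the construction of the kernel σ_N, the 4M×4M interpolation matrix K is invertible; consequently, for every u ∈ {−1,1}^M there exist unique coefficients α = (α_0,α_1,α_2,α_3) with Kα = (u,0,0,0)ᵀ, i.e. the Hermite interpolation problem q(x_i) = u_i, X_1q(x_i) = X_2q(x_i) = X_3q(x_i) = 0 has a unique solution of the kernel-expansion form q(x) = Σ_{j=1}^M (α_{j,0}σ_N(x,x_j) + Σ_{k=1}^3 α_{j,k} X_k^y σ_N(x,x_j)). -/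

import Mathlib

noncomputable section

abbrev Mat3 := Matrix (Fin 3) (Fin 3) ℝ

/-- membership in SO(3) -/
def IsSO3 (x : Mat3) : Prop := x.transpose * x = 1 ∧ x.det = 1

/-- rotation angle -/
def rotAngle (x : Mat3) : ℝ := Real.arccos ((Matrix.trace x - 1) / 2)

/-- generators of so(3) -/
def Lgen : Fin 3 → Mat3 :=
  ![!![0, 0, 0; 0, 0, -1; 0, 1, 0],
    !![0, 0, 1; 0, 0, 0; -1, 0, 0],
    !![0, -1, 0; 1, 0, 0; 0, 0, 0]]

/-- derivative in the first variable along generator `i` -/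
def Xx (i : Fin 3) (f : Mat3 → Mat3 → ℝ) : Mat3 → Mat3 → ℝ :=
  fun x y => deriv (fun t : ℝ => f (x * NormedSpace.exp (t • Lgen i)) y) 0

/-- derivative in the second variable along generator `i` -/
def Xy (i : Fin 3) (f : Mat3 → Mat3 → ℝ) : Mat3 → Mat3 → ℝ :=
  fun x y => deriv (fun t : ℝ => f x (y * NormedSpace.exp (t • Lgen i))) 0

/-- iterated integrals of the sign of the Chebyshev polynomial: the perfect B-spline chain -/
def fspline (s : ℕ) : ℕ → ℝ → ℝ
  | 0 => fun x => (-1 : ℝ) ^ (s - 1) * Real.sign ((Polynomial.Chebyshev.U ℝ ((s : ℤ) - 1)).eval x)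
  | (k + 1) => fun x => ∫ t in (-1 : ℝ)..x, fspline s k t

/-- the scaled perfect B-spline g̃_{s-1} -/
def gtilde (s : ℕ) (x : ℝ) : ℝ := fspline s (s - 1) (2 * x)

/-- discrete norm ‖g̃‖_{1,N} -/
def gnorm (s N : ℕ) : ℝ :=
  ∑ k ∈ Finset.Icc (-(N : ℤ)) (N : ℤ), gtilde s ((k : ℝ) / (2 * ((N : ℝ) + 1)))

/-- the trigonometric kernel σ̃_N (real-valued) -/
def sigmaT (s N : ℕ) (t : ℝ) : ℝ :=
  ((1 / (gnorm s N : ℂ)) *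
      ∑ k ∈ Finset.Icc (-(N : ℤ)) (N : ℤ),
        (gtilde s ((k : ℝ) / (2 * ((N : ℝ) + 1))) : ℂ) * Complex.exp ((k : ℂ) * t * Complex.I)).re

/-- the zonal kernel σ_N on SO(3) -/
def sigmaK (s N : ℕ) (x y : Mat3) : ℝ := sigmaT s N (rotAngle (y⁻¹ * x))

/-- rotation axis components -/
def axisComp : Fin 3 → Mat3 → ℝ :=
  ![fun x => (x 2 1 - x 1 2) / (2 * Real.sin (rotAngle x)),
    fun x => (x 0 2 - x 2 0) / (2 * Real.sin (rotAngle x)),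
    fun x => (x 1 0 - x 0 1) / (2 * Real.sin (rotAngle x))]

/-- Levi-Civita symbol on `Fin 3` -/
def eps3 (a b c : Fin 3) : ℝ :=
  if (a, b, c) = (0, 1, 2) ∨ (a, b, c) = (1, 2, 0) ∨ (a, b, c) = (2, 0, 1) then 1
  else if (a, b, c) = (2, 1, 0) ∨ (a, b, c) = (1, 0, 2) ∨ (a, b, c) = (0, 2, 1) then -1
  else 0

/-- constants c_{l,s} -/
def cConst : ℕ → ℕ → ℝ
  | 0, s => 1.02 * (Nat.factorial (s - 1)) * 2 ^ s * s
  | 1, s => 1.02 * (Nat.factorial (s - 1)) * 2 ^ s * (2 * s)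
  | 2, s => 1.02 * (Nat.factorial (s - 1)) * 2 ^ s * (4 * s + 1)
  | _, s => 1.02 * (Nat.factorial (s - 1)) * 2 ^ s * (9 * s - 2)

/-- ζ(m) for natural m -/
def zetaNat (m : ℕ) : ℝ := ∑' n : ℕ, (1 : ℝ) / ((n : ℝ) + 1) ^ m

/-- constants C_{i,s} = 124 c_{i,s} ζ(s-2) -/
def CConst (i s : ℕ) : ℝ := 124 * cConst i s * zetaNat (s - 2)

end

open scoped Real

/-- block selector: 0 ↦ kernel, p ↦ derivative along generator p−1 -/
def toOp : Fin 4 → Option (Fin 3) := ![none, some 0, some 1, some 2]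

/-- the (p,q) block kernel of the interpolation matrix -/
noncomputable def Kblock (s N : ℕ) (p q : Fin 4) : Mat3 → Mat3 → ℝ :=
  match toOp p, toOp q with
  | none, none => sigmaK s N
  | none, some j => Xx j (sigmaK s N)
  | some i, none => Xy i (sigmaK s N)
  | some i, some j => Xx j (Xy i (sigmaK s N))

/-- the 4M × 4M interpolation matrix K -/
noncomputable def Kmat (s N : ℕ) {M : ℕ} (x : Fin M → Mat3) :
    Matrix (Fin 4 × Fin M) (Fin 4 × Fin M) ℝ :=
  Matrix.of fun pa qb => Kblock s N pa.1 qb.1 (x pa.2) (x qb.2)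

/-- right-hand side (u,0,0,0)ᵀ -/
def rhsVec {M : ℕ} (u : Fin M → ℝ) : Fin 4 × Fin M → ℝ :=
  fun pa => if pa.1 = 0 then u pa.2 else 0

/-!
For points in SO(3) the kernel is a polynomial `P` in the cosine of the rotation angle, and its
derivatives are combinations of `P'` and `P''`. The matrix becomes strictly diagonally dominant once
the columns belonging to derivatives are weighted by a multiple of `1 / (N + 1)`.

* The coefficients of the kernel are samples of the end of a chain of iterated primitives that
  starts with a step function. Multiplying their exponential sum at `z = exp (i ω)` by `1 - z` sums
  by parts, and each integration in the chain gains one further power of the sampling step. With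
  `s = 8` this gives `(N + 1) ^ 8 * (2 - 2 * cos ω) ^ 4 * |P (cos ω)| ≤ C`. For derivatives of the
  kernel the samples carry a polynomial weight of degree at most `2`, and `α + β x + γ x ^ 2` times
  a spline is again the end of such a chain.
* At `z = 1` the exponential sum is a trapezoidal sum, and the same integrations show that it is
  very close to the integral, so the diagonal entries are governed by moments of the spline.
* Lifting rotations to unit quaternions turns the separation of the angles into a separation of
  points in `ℝ⁴`. Comparing volumes bounds the number of points in every ball, and the layer cake
  formula turns this count into a bound for the off-diagonal sums.
-/

section SampleSums

open Finset MeasureTheory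

lemma norm_one_sub_mul_sum_range_succ_le {𝕜 : Type*} [NormedField 𝕜] {z : 𝕜} (hz : ‖z‖ = 1)
    (f : ℕ → 𝕜) (n : ℕ) :
    ‖(1 - z) * ∑ i ∈ range (n + 1), f i * z ^ i‖ ≤
      ‖f 0‖ + ∑ i ∈ range n, ‖f (i + 1) - f i‖ + ‖f n‖ := by
  have by_parts : (1 - z) * ∑ i ∈ range (n + 1), f i * z ^ i =
      f 0 + ∑ i ∈ range n, (f (i + 1) - f i) * z ^ (i + 1) - f n * z ^ (n + 1) := by
    induction n with
    | zero => simp only [zero_add, range_one, sum_singleton, range_zero, sum_empty]; ring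
    | succ n ih =>
      rw [sum_range_succ, mul_add, ih, sum_range_succ]
      ring
  have norm_mul_pow (w : 𝕜) (i : ℕ) : ‖w * z ^ i‖ = ‖w‖ := by simp [hz]
  rw [by_parts]
  refine (norm_sub_le _ _).trans (add_le_add ((norm_add_le _ _).trans ?_) (norm_mul_pow _ _).le)
  exact add_le_add_right ((norm_sum_le _ _).trans_eq <| sum_congr rfl fun i _ => norm_mul_pow _ _) _

/-- The exponential sum of the samples of `H` at `m` points of step `h` starting at `a + x`; the
free offset `x` is what makes it possible to integrate and differentiate between the nodes. -/
noncomputable def sampleSum (a h : ℝ) (m : ℕ) (z : ℂ) (H : ℝ → ℝ) (x : ℝ) : ℂ :=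
  ∑ i ∈ range m, (H (a + i * h + x) : ℂ) * z ^ i

/-- `F` is a primitive of `f` on `[a, b]`. The integral form allows `f` to jump. -/
def IsPrimitiveOn (F f : ℝ → ℝ) (a b : ℝ) : Prop :=
  IntervalIntegrable f volume a b ∧
    ∀ x ∈ Set.Icc a b, ∀ y ∈ Set.Icc a b, ∫ t in x..y, f t = F y - F x

/-- The increments of `H` on `s` are dominated by those of `Φ`; for monotone `Φ` this bounds the
total variation of `H` by the increase of `Φ`. -/
def IncrementsDominatedOn (H Φ : ℝ → ℝ) (s : Set ℝ) : Prop :=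
  ∀ x ∈ s, ∀ y ∈ s, x ≤ y → |H y - H x| ≤ Φ y - Φ x

lemma IsPrimitiveOn.intervalIntegrable {F f : ℝ → ℝ} {a b x y : ℝ} (hF : IsPrimitiveOn F f a b)
    (hx : x ∈ Set.Icc a b) (hy : y ∈ Set.Icc a b) : IntervalIntegrable f volume x y := by
  refine hF.1.mono_set ?_
  rw [Set.uIcc_of_le (hx.1.trans hx.2)]
  exact Set.uIcc_subset_Icc hx hy

lemma IncrementsDominatedOn.monotoneOn {H Φ : ℝ → ℝ} {s : Set ℝ}
    (hΦ : IncrementsDominatedOn H Φ s) : MonotoneOn Φ s :=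
  fun x hx y hy hxy => sub_nonneg.1 ((abs_nonneg _).trans (hΦ x hx y hy hxy))

variable {a b h x y B : ℝ} {m : ℕ} {z : ℂ} {F f : ℝ → ℝ}

lemma mul_sampleSum_step (a h : ℝ) (m : ℕ) (z : ℂ) (H : ℝ → ℝ) :
    z * sampleSum a h m z H h = sampleSum a h m z H 0 + H (a + m * h) * z ^ m - H a := by
  have first := sum_range_succ' (fun i : ℕ => (H (a + i * h) : ℂ) * z ^ i) m
  have last := sum_range_succ (fun i : ℕ => (H (a + i * h) : ℂ) * z ^ i) m
  have shifted : z * sampleSum a h m z H h =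
      ∑ i ∈ range m, (H (a + ((i + 1 : ℕ) : ℝ) * h) : ℂ) * z ^ (i + 1) := by
    rw [sampleSum, mul_sum]
    refine sum_congr rfl fun i _ => ?_
    rw [show a + (i : ℝ) * h + h = a + ((i + 1 : ℕ) : ℝ) * h by push_cast; ring]
    ring
  rw [shifted, sampleSum]
  rw [last] at first
  simp only [Nat.cast_zero, zero_mul, add_zero, pow_zero, mul_one] at first ⊢
  linear_combination -first

lemma grid_mem_Icc (hm : a + m * h = b) (hh : 0 ≤ h) {i : ℕ} (hi : i < m)
    (hx : x ∈ Set.Icc 0 h) : a + i * h + x ∈ Set.Icc a b := by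
  have hi' : ((i : ℝ) + 1) * h ≤ m * h := mul_le_mul_of_nonneg_right (by exact_mod_cast hi) hh
  have : 0 ≤ (i : ℝ) * h := by positivity
  exact ⟨by linarith [hx.1], by linarith [hx.2]⟩

lemma IsPrimitiveOn.intervalIntegrable_sampleSum_term (hF : IsPrimitiveOn F f a b)
    (hm : a + m * h = b) (hh : 0 ≤ h) (z : ℂ) (hx : x ∈ Set.Icc 0 h) (hy : y ∈ Set.Icc 0 h)
    {i : ℕ} (hi : i ∈ range m) :
    IntervalIntegrable (fun s => (f (a + i * h + s) : ℂ) * z ^ i) volume x y := by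
  have hi := mem_range.1 hi
  have := (hF.intervalIntegrable (grid_mem_Icc hm hh hi hx)
    (grid_mem_Icc hm hh hi hy)).comp_add_left (a + i * h)
  simp only [add_sub_cancel_left] at this
  exact IntervalIntegrable.mul_const ⟨this.1.ofReal, this.2.ofReal⟩ _

lemma IsPrimitiveOn.intervalIntegrable_sampleSum (hF : IsPrimitiveOn F f a b)
    (hm : a + m * h = b) (hh : 0 ≤ h) (z : ℂ) (hx : x ∈ Set.Icc 0 h) (hy : y ∈ Set.Icc 0 h) :
    IntervalIntegrable (sampleSum a h m z f) volume x y := by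
  have := IntervalIntegrable.sum _ fun i =>
    hF.intervalIntegrable_sampleSum_term hm hh z hx hy (i := i)
  rwa [sum_fn] at this

lemma IsPrimitiveOn.integral_sampleSum (hF : IsPrimitiveOn F f a b)
    (hm : a + m * h = b) (hh : 0 ≤ h) (z : ℂ) (hx : x ∈ Set.Icc 0 h) (hy : y ∈ Set.Icc 0 h) :
    ∫ s in x..y, sampleSum a h m z f s = sampleSum a h m z F y - sampleSum a h m z F x := by
  unfold sampleSum
  rw [intervalIntegral.integral_finsetSum fun i =>
    hF.intervalIntegrable_sampleSum_term hm hh z hx hy (i := i), ← sum_sub_distrib]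
  refine sum_congr rfl fun i hi => ?_
  have hi := mem_range.1 hi
  rw [intervalIntegral.integral_mul_const, intervalIntegral.integral_ofReal,
    intervalIntegral.integral_comp_add_left,
    hF.2 _ (grid_mem_Icc hm hh hi hx) _ (grid_mem_Icc hm hh hi hy)]
  push_cast
  ring

lemma IsPrimitiveOn.norm_sampleSum_sub_le (hF : IsPrimitiveOn F f a b)
    (hm : a + m * h = b) (hh : 0 ≤ h) (hB : ∀ x ∈ Set.Icc 0 h, ‖sampleSum a h m z f x‖ ≤ B)
    (hx : x ∈ Set.Icc 0 h) (hy : y ∈ Set.Icc 0 h) :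
    ‖sampleSum a h m z F y - sampleSum a h m z F x‖ ≤ B * |y - x| := by
  rw [← hF.integral_sampleSum hm hh z hx hy]
  refine intervalIntegral.norm_integral_le_of_norm_le_const fun s hs => hB s ?_
  exact Set.uIcc_subset_Icc hx hy (Set.uIoc_subset_uIcc hs)

lemma IsPrimitiveOn.norm_one_sub_mul_sampleSum_le (hF : IsPrimitiveOn F f a b) (ha : F a = 0)
    (hb : F b = 0) (hm : a + m * h = b) (hh : 0 ≤ h) (hz : ‖z‖ = 1)
    (hB : ∀ x ∈ Set.Icc 0 h, ‖sampleSum a h m z f x‖ ≤ B) (hx : x ∈ Set.Icc 0 h) :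
    ‖(1 - z) * sampleSum a h m z F x‖ ≤ h * B := by
  have shift := mul_sampleSum_step a h m z F
  rw [hm, ha, hb, Complex.ofReal_zero] at shift
  have split : (1 - z) * sampleSum a h m z F x =
      (sampleSum a h m z F x - sampleSum a h m z F 0) +
        z * (sampleSum a h m z F h - sampleSum a h m z F x) := by
    linear_combination -shift
  have left := hF.norm_sampleSum_sub_le hm hh hB (Set.left_mem_Icc.2 hh) hx
  have right := hF.norm_sampleSum_sub_le hm hh hB hx (Set.right_mem_Icc.2 hh)
  rw [abs_of_nonneg (by linarith [hx.1])] at left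
  rw [abs_of_nonneg (by linarith [hx.2])] at right
  rw [split]
  refine (norm_add_le _ _).trans ?_
  rw [norm_mul, hz, one_mul]
  linarith

lemma IncrementsDominatedOn.norm_one_sub_mul_sampleSum_le {H Φ : ℝ → ℝ}
    (hΦ : IncrementsDominatedOn H Φ (Set.Icc a b)) (hm : a + m * h = b) (hh : 0 ≤ h)
    (hz : ‖z‖ = 1) (hx : x ∈ Set.Icc 0 h) :
    ‖(1 - z) * sampleSum a h m z H x‖ ≤ |H a| + |H b| + (Φ b - Φ a) := by
  have hab : a ≤ b := by rw [← hm]; exact le_add_of_nonneg_right (by positivity)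
  have ha := Set.left_mem_Icc.2 hab
  have hb := Set.right_mem_Icc.2 hab
  obtain _ | n := m
  · have := sub_nonneg.2 (hΦ.monotoneOn ha hb hab)
    simp only [sampleSum, range_zero, sum_empty, mul_zero, norm_zero]
    positivity
  have node_mem {i : ℕ} (hi : i ≤ n) : a + i * h + x ∈ Set.Icc a b :=
    grid_mem_Icc hm hh (Nat.lt_succ_of_le hi) hx
  have increments : ∑ i ∈ range n, ‖(H (a + (i + 1 : ℕ) * h + x) : ℂ) - H (a + i * h + x)‖ ≤
      Φ (a + n * h + x) - Φ (a + (0 : ℕ) * h + x) := by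
    rw [← sum_range_sub fun i : ℕ => Φ (a + i * h + x)]
    refine sum_le_sum fun i hi => ?_
    rw [← Complex.ofReal_sub, Complex.norm_real]
    have hi := mem_range.1 hi
    exact hΦ _ (node_mem hi.le) _ (node_mem hi) (by push_cast; linarith)
  have first := hΦ a ha _ (node_mem n.zero_le) (node_mem n.zero_le).1
  have last := hΦ _ (node_mem le_rfl) b hb (node_mem le_rfl).2
  have first' := abs_sub_abs_le_abs_sub (H (a + (0 : ℕ) * h + x)) (H a)
  have last' := abs_sub_abs_le_abs_sub (H (a + n * h + x)) (H b)
  rw [abs_sub_comm] at last'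
  refine (norm_one_sub_mul_sum_range_succ_le hz (fun i => (H (a + i * h + x) : ℂ)) n).trans ?_
  simp only [Complex.norm_real, Real.norm_eq_abs]
  linarith

/-- Each of the `n` integrations gains a factor `h / ‖1 - z‖`, summation by parts a further
`1 / ‖1 - z‖`. -/
lemma norm_one_sub_pow_mul_norm_sampleSum_le {H : ℕ → ℝ → ℝ} {Φ : ℝ → ℝ} {n : ℕ}
    (hH : ∀ j < n, IsPrimitiveOn (H (j + 1)) (H j) a b)
    (hHa : ∀ j < n, H (j + 1) a = 0) (hHb : ∀ j < n, H (j + 1) b = 0)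
    (hΦ : IncrementsDominatedOn (H 0) Φ (Set.Icc a b)) (hm : a + m * h = b) (hh : 0 ≤ h)
    (hz : ‖z‖ = 1) (hx : x ∈ Set.Icc 0 h) :
    ‖1 - z‖ ^ (n + 1) * ‖sampleSum a h m z (H n) x‖ ≤
      h ^ n * (|H 0 a| + |H 0 b| + (Φ b - Φ a)) := by
  induction n generalizing x with
  | zero => simpa [norm_mul] using hΦ.norm_one_sub_mul_sampleSum_le hm hh hz hx
  | succ n ih =>
    have ih {y : ℝ} (hy : y ∈ Set.Icc 0 h) := ih (x := y) (fun j hj => hH j (by omega))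
      (fun j hj => hHa j (by omega)) (fun j hj => hHb j (by omega)) hy
    obtain hz1 | hz1 := (norm_nonneg (1 - z)).eq_or_lt
    · have hab : a ≤ b := by rw [← hm]; exact le_add_of_nonneg_right (by positivity)
      have := sub_nonneg.2
        (hΦ.monotoneOn (Set.left_mem_Icc.2 hab) (Set.right_mem_Icc.2 hab) hab)
      rw [← hz1, zero_pow (by omega), zero_mul]
      positivity
    have step := (hH n n.lt_succ_self).norm_one_sub_mul_sampleSum_le (hHa n n.lt_succ_self)
      (hHb n n.lt_succ_self) hm hh hz
      (fun y hy => (le_div_iff₀' (pow_pos hz1 (n + 1))).2 (ih hy)) hx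
    rw [norm_mul, ← mul_div_assoc, le_div_iff₀ (pow_pos hz1 _)] at step
    calc ‖1 - z‖ ^ (n + 1 + 1) * ‖sampleSum a h m z (H (n + 1)) x‖
        = ‖1 - z‖ * ‖sampleSum a h m z (H (n + 1)) x‖ * ‖1 - z‖ ^ (n + 1) := by ring
      _ ≤ h * (h ^ n * (|H 0 a| + |H 0 b| + (Φ b - Φ a))) := step
      _ = h ^ (n + 1) * (|H 0 a| + |H 0 b| + (Φ b - Φ a)) := by ring

lemma norm_mul_sampleSum_one_sub_le {G : ℝ → ℝ} (hF : IsPrimitiveOn F f a b)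
    (hG : IsPrimitiveOn G F a b) (hm : a + m * h = b) (hh : 0 ≤ h)
    (hB : ∀ x ∈ Set.Icc 0 h, ‖sampleSum a h m 1 f x‖ ≤ B) (hx : x ∈ Set.Icc 0 h) :
    ‖h * sampleSum a h m 1 F x - ((G b - G a : ℝ) : ℂ)‖ ≤ h * (h * B) := by
  have h0 : (0 : ℝ) ∈ Set.Icc 0 h := Set.left_mem_Icc.2 hh
  have h1 : h ∈ Set.Icc 0 h := Set.right_mem_Icc.2 hh
  have hB0 : 0 ≤ B := (norm_nonneg _).trans (hB 0 h0)
  have total : ∫ y in (0 : ℝ)..h, sampleSum a h m 1 F y = ((G b - G a : ℝ) : ℂ) := by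
    have shift := mul_sampleSum_step a h m 1 G
    rw [hm, one_mul, one_pow, mul_one] at shift
    rw [hG.integral_sampleSum hm hh 1 h0 h1, shift]
    push_cast
    ring
  have oscillation : h * sampleSum a h m 1 F x - ((G b - G a : ℝ) : ℂ) =
      ∫ y in (0 : ℝ)..h, (sampleSum a h m 1 F x - sampleSum a h m 1 F y) := by
    rw [intervalIntegral.integral_sub intervalIntegrable_const
      (hG.intervalIntegrable_sampleSum hm hh 1 h0 h1), intervalIntegral.integral_const, total,
      sub_zero, Complex.real_smul]
  rw [oscillation]
  refine (intervalIntegral.norm_integral_le_of_norm_le_const (C := h * B) fun y hy => ?_).trans_eq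
    (by rw [sub_zero, abs_of_nonneg hh, mul_comm])
  rw [Set.uIoc_of_le hh] at hy
  refine (hF.norm_sampleSum_sub_le hm hh hB ⟨hy.1.le, hy.2⟩ hx).trans ?_
  rw [mul_comm]
  refine mul_le_mul_of_nonneg_right (abs_le.2 ⟨?_, ?_⟩) hB0 <;> linarith [hx.1, hx.2, hy.1, hy.2]

/-- Accuracy of the trapezoidal rule: at `z = 1` the mean of a sample sum over the offset is an
integral, which vanishes for all but the last primitive, and integrating the oscillation around the
mean gains a factor `h`. -/
lemma norm_mul_sampleSum_one_sub_le_pow {H : ℕ → ℝ → ℝ} {n : ℕ}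
    (hH : ∀ j ≤ n + 1, IsPrimitiveOn (H (j + 1)) (H j) a b)
    (hHa : ∀ j ≤ n, H (j + 1) a = 0) (hHb : ∀ j ≤ n, H (j + 1) b = 0)
    (hB : ∀ x ∈ Set.Icc a b, |H 0 x| ≤ B) (hm : a + m * h = b) (hh : 0 < h)
    (hx : x ∈ Set.Icc 0 h) :
    ‖h * sampleSum a h m 1 (H (n + 1)) x - ((H (n + 2) b - H (n + 2) a : ℝ) : ℂ)‖ ≤
      (b - a) * h ^ (n + 1) * B := by
  have bound : ∀ j ≤ n, ∀ x ∈ Set.Icc 0 h, ‖sampleSum a h m 1 (H j) x‖ ≤ h ^ j * (m * B) := by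
    intro j
    induction j with
    | zero =>
      intro _ x hx
      refine (norm_sum_le _ _).trans <|
        (sum_le_card_nsmul _ _ B fun i hi => ?_).trans_eq (by simp)
      simpa using hB _ (grid_mem_Icc hm hh.le (mem_range.1 hi) hx)
    | succ j ih =>
      intro hj x hx
      have mean := norm_mul_sampleSum_one_sub_le (hH j (by omega)) (hH (j + 1) (by omega)) hm
        hh.le (ih (by omega)) hx
      rw [hHa (j + 1) hj, hHb (j + 1) hj, sub_zero, Complex.ofReal_zero, sub_zero, norm_mul,
        Complex.norm_real, Real.norm_eq_abs, abs_of_pos hh, mul_le_mul_iff_right₀ hh] at mean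
      rwa [pow_succ', mul_assoc]
  refine (norm_mul_sampleSum_one_sub_le (hH n (by omega)) (hH (n + 1) le_rfl) hm hh.le
    (bound n le_rfl) hx).trans_eq ?_
  rw [← hm]
  ring

end SampleSums

section PerfectSplines

open Finset MeasureTheory

lemma real_sign_mul (x y : ℝ) : Real.sign (x * y) = Real.sign x * Real.sign y := by
  rcases lt_trichotomy x 0 with hx | rfl | hx <;> rcases lt_trichotomy y 0 with hy | rfl | hy <;>
    simp [Real.sign_of_neg, Real.sign_of_pos, mul_pos_of_neg_of_neg, mul_neg_of_neg_of_pos,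
      mul_neg_of_pos_of_neg, *]

lemma real_sign_prod {ι : Type*} (s : Finset ι) (f : ι → ℝ) :
    Real.sign (∏ i ∈ s, f i) = ∏ i ∈ s, Real.sign (f i) :=
  map_prod (⟨⟨Real.sign, Real.sign_one⟩, real_sign_mul⟩ : ℝ →* ℝ) f s

lemma monotone_real_sign : Monotone Real.sign := by
  intro x y h
  rcases lt_trichotomy x 0 with hx | rfl | hx <;> rcases lt_trichotomy y 0 with hy | rfl | hy <;>
    simp [Real.sign_of_neg, Real.sign_of_pos, *] <;> linarith

lemma abs_real_sign_le_one (x : ℝ) : |Real.sign x| ≤ 1 := by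
  rcases Real.sign_apply_eq x with h | h | h <;> rw [h] <;> norm_num

lemma IncrementsDominatedOn.add {H K Φ Ψ : ℝ → ℝ} {s : Set ℝ} (hH : IncrementsDominatedOn H Φ s)
    (hK : IncrementsDominatedOn K Ψ s) :
    IncrementsDominatedOn (fun x => H x + K x) (fun x => Φ x + Ψ x) s := by
  intro x hx y hy hxy
  calc |H y + K y - (H x + K x)| = |(H y - H x) + (K y - K x)| := by ring_nf
    _ ≤ (Φ y - Φ x) + (Ψ y - Ψ x) :=
      (abs_add_le _ _).trans (add_le_add (hH x hx y hy hxy) (hK x hx y hy hxy))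
    _ = Φ y + Ψ y - (Φ x + Ψ x) := by ring

lemma IncrementsDominatedOn.const_mul {H Φ : ℝ → ℝ} {s : Set ℝ}
    (hH : IncrementsDominatedOn H Φ s) (c : ℝ) :
    IncrementsDominatedOn (fun x => c * H x) (fun x => |c| * Φ x) s := by
  intro x hx y hy hxy
  rw [← mul_sub, ← mul_sub, abs_mul]
  exact mul_le_mul_of_nonneg_left (hH x hx y hy hxy) (abs_nonneg c)

lemma IncrementsDominatedOn.mul {H K Φ Ψ : ℝ → ℝ} {s : Set ℝ} {A B : ℝ}
    (hH : IncrementsDominatedOn H Φ s) (hHA : ∀ x ∈ s, |H x| ≤ A)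
    (hK : IncrementsDominatedOn K Ψ s) (hKB : ∀ x ∈ s, |K x| ≤ B) :
    IncrementsDominatedOn (fun x => H x * K x) (fun x => A * Ψ x + B * Φ x) s := by
  intro x hx y hy hxy
  have hA : 0 ≤ A := (abs_nonneg _).trans (hHA x hx)
  have hB : 0 ≤ B := (abs_nonneg _).trans (hKB x hx)
  calc |H y * K y - H x * K x| = |H y * (K y - K x) + K x * (H y - H x)| := by ring_nf
    _ ≤ |H y| * |K y - K x| + |K x| * |H y - H x| := by
      simpa only [abs_mul] using abs_add_le (H y * (K y - K x)) (K x * (H y - H x))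
    _ ≤ A * (Ψ y - Ψ x) + B * (Φ y - Φ x) := by
      gcongr
      exacts [hHA y hy, hK x hx y hy hxy, hKB x hx, hH x hx y hy hxy]
    _ = A * Ψ y + B * Φ y - (A * Ψ x + B * Φ x) := by ring

lemma IncrementsDominatedOn.prod {ι : Type*} {f φ : ι → ℝ → ℝ} {s : Set ℝ} (t : Finset ι)
    (hf : ∀ i, ∀ x ∈ s, |f i x| ≤ 1) (h : ∀ i, IncrementsDominatedOn (f i) (φ i) s) :
    IncrementsDominatedOn (fun x => ∏ i ∈ t, f i x) (fun x => ∑ i ∈ t, φ i x) s := by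
  classical
  induction t using Finset.induction_on with
  | empty => intro x _ y _ _; simp
  | insert i t hi ih =>
    have bound : ∀ x ∈ s, |∏ i ∈ t, f i x| ≤ 1 := fun x hx => by
      rw [abs_prod]
      exact prod_le_one (fun i _ => abs_nonneg _) fun i _ => hf i x hx
    simpa [prod_insert hi, sum_insert hi, add_comm] using (h i).mul (hf i) ih bound

lemma IsPrimitiveOn.incrementsDominatedOn {F f : ℝ → ℝ} {a b C : ℝ} (hF : IsPrimitiveOn F f a b)
    (hC : ∀ x ∈ Set.Icc a b, |f x| ≤ C) :
    IncrementsDominatedOn F (fun x => C * x) (Set.Icc a b) := by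
  intro x hx y hy hxy
  rw [← hF.2 x hx y hy, ← mul_sub, ← abs_of_nonneg (sub_nonneg.2 hxy), ← Real.norm_eq_abs]
  exact intervalIntegral.norm_integral_le_of_norm_le_const fun t ht =>
    hC t (Set.uIcc_subset_Icc hx hy (Set.uIoc_subset_uIcc ht))

lemma isPrimitiveOn_of_hasDerivAt_off_countable {F f : ℝ → ℝ} {s : Set ℝ} (hs : s.Countable)
    (hF : Continuous F) (hd : ∀ x ∉ s, HasDerivAt F (f x) x)
    (hf : ∀ a b, IntervalIntegrable f volume a b) (a b : ℝ) : IsPrimitiveOn F f a b :=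
  ⟨hf a b, fun _ _ _ _ => integral_eq_of_hasDerivAt_off_countable F f hs hF.continuousOn
    (fun t ht => hd t ht.2) (hf _ _)⟩

/-- The perfect splines with knots `τ` based at `a`: the `(k + 1)`-st is the primitive vanishing at
`a` of the `k`-th one. They are written with truncated powers, which represents them correctly when
`τ` is increasing and lies to the right of `a`. -/
noncomputable def perfectSpline (a : ℝ) {n : ℕ} (τ : Fin n → ℝ) : ℕ → ℝ → ℝ
  | 0 => fun x => (-1) ^ n * ∏ i, Real.sign (x - τ i)
  | k + 1 => fun x => ((x - a) ^ (k + 1) +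
      2 * ∑ i, (-1) ^ (i.val + 1) * max (x - τ i) 0 ^ (k + 1)) / (k + 1).factorial

variable {n : ℕ} {τ : Fin n → ℝ} {a b x : ℝ}

lemma neg_one_pow_mul_prod_sign_sub (hτ : StrictMono τ) (hx : x ∉ Set.range τ) :
    (-1) ^ n * ∏ i, Real.sign (x - τ i) =
      1 + 2 * ∑ i, (-1) ^ (i.val + 1) * (if τ i < x then 1 else 0 : ℝ) := by
  induction n with
  | zero => simp
  | succ n ih =>
    have hne (i) : x ≠ τ i := fun h => hx ⟨i, h.symm⟩
    have ih := ih (τ := τ ∘ Fin.castSucc) (hτ.comp Fin.strictMono_castSucc)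
      fun ⟨i, hi⟩ => hne _ hi.symm
    simp only [Function.comp_apply] at ih
    rw [Fin.prod_univ_castSucc, Fin.sum_univ_castSucc]
    simp only [Fin.val_castSucc, Fin.val_last]
    rcases (hne (Fin.last n)).lt_or_gt with h | h
    · rw [Real.sign_of_neg (by linarith), if_neg h.le.not_gt]
      linear_combination ih
    · have one (i : Fin n) : Real.sign (x - τ i.castSucc) = 1 :=
        Real.sign_of_pos (by linarith [hτ (Fin.castSucc_lt_last i)])
      simp only [one, prod_const_one, mul_one] at ih ⊢
      rw [Real.sign_of_pos (by linarith), if_pos h]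
      linear_combination ih

lemma perfectSpline_of_notMem_range (a : ℝ) (hτ : StrictMono τ) (hx : x ∉ Set.range τ) (k : ℕ) :
    perfectSpline a τ k x = ((x - a) ^ k +
      2 * ∑ i, (-1) ^ (i.val + 1) * (if τ i < x then (x - τ i) ^ k else 0)) / k.factorial := by
  cases k with
  | zero => simpa [perfectSpline] using neg_one_pow_mul_prod_sign_sub hτ hx
  | succ k =>
    simp only [perfectSpline]
    congr! 5 with i
    split_ifs with h
    · rw [max_eq_left (by linarith)]
    · rw [max_eq_right (by linarith), zero_pow k.succ_ne_zero]

lemma hasDerivAt_max_sub_zero_pow (k : ℕ) {c : ℝ} (hx : x ≠ c) :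
    HasDerivAt (fun y => max (y - c) 0 ^ (k + 1)) ((k + 1) * (if c < x then (x - c) ^ k else 0))
      x := by
  rcases hx.lt_or_gt with h | h
  · rw [if_neg h.le.not_gt, mul_zero]
    refine (hasDerivAt_const x (0 : ℝ)).congr_of_eventuallyEq ?_
    filter_upwards [Iio_mem_nhds h] with y hy
    rw [max_eq_right (by linarith [Set.mem_Iio.1 hy]), zero_pow k.succ_ne_zero]
  · rw [if_pos h]
    have : HasDerivAt (fun y => (y - c) ^ (k + 1)) ((k + 1) * (x - c) ^ k) x := by
      simpa using ((hasDerivAt_id x).sub_const c).fun_pow (k + 1)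
    refine this.congr_of_eventuallyEq ?_
    filter_upwards [Ioi_mem_nhds h] with y hy
    rw [max_eq_left (by linarith [Set.mem_Ioi.1 hy])]

lemma hasDerivAt_perfectSpline (a : ℝ) (hτ : StrictMono τ) (hx : x ∉ Set.range τ) (k : ℕ) :
    HasDerivAt (perfectSpline a τ (k + 1)) (perfectSpline a τ k x) x := by
  have power : HasDerivAt (fun y : ℝ => (y - a) ^ (k + 1)) ((k + 1) * (x - a) ^ k) x := by
    simpa using ((hasDerivAt_id x).sub_const a).fun_pow (k + 1)
  have truncated (i) := (hasDerivAt_max_sub_zero_pow k fun h => hx ⟨i, h.symm⟩).const_mul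
    ((-1 : ℝ) ^ (i.val + 1))
  refine ((power.add ((HasDerivAt.fun_sum (u := univ) fun i _ => truncated i).const_mul
    2)).div_const ((k + 1).factorial : ℝ)).congr_deriv ?_
  rw [perfectSpline_of_notMem_range a hτ hx, Nat.factorial_succ]
  simp only [mul_left_comm _ ((k : ℝ) + 1), ← mul_sum, ← mul_add]
  push_cast
  exact mul_div_mul_left _ _ (by positivity)

lemma continuous_perfectSpline_succ (a : ℝ) (τ : Fin n → ℝ) (k : ℕ) :
    Continuous (perfectSpline a τ (k + 1)) := by
  unfold perfectSpline
  fun_prop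

lemma abs_perfectSpline_zero_le_one (a : ℝ) (τ : Fin n → ℝ) (x : ℝ) :
    |perfectSpline a τ 0 x| ≤ 1 := by
  simp only [perfectSpline, abs_mul, abs_pow, abs_neg, abs_one, one_pow, one_mul, abs_prod]
  exact prod_le_one (fun i _ => abs_nonneg _) fun i _ => abs_real_sign_le_one _

lemma intervalIntegrable_perfectSpline (a : ℝ) (τ : Fin n → ℝ) (k : ℕ) (b c : ℝ) :
    IntervalIntegrable (perfectSpline a τ k) volume b c := by
  cases k with
  | zero =>
    have measurable : Measurable (perfectSpline a τ 0) := by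
      unfold perfectSpline
      exact (Finset.measurable_prod _ fun i _ => monotone_real_sign.measurable.comp
        (measurable_id.sub_const _)).const_mul _
    exact (intervalIntegrable_const (c := (1 : ℝ))).mono_fun measurable.aestronglyMeasurable
      (.of_forall fun x => by simpa using abs_perfectSpline_zero_le_one a τ x)
  | succ k => exact (continuous_perfectSpline_succ a τ k).intervalIntegrable _ _

lemma isPrimitiveOn_perfectSpline (a : ℝ) (hτ : StrictMono τ) (k : ℕ) (b c : ℝ) :
    IsPrimitiveOn (perfectSpline a τ (k + 1)) (perfectSpline a τ k) b c :=
  isPrimitiveOn_of_hasDerivAt_off_countable (Set.finite_range τ).countable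
    (continuous_perfectSpline_succ a τ k) (fun _ hx => hasDerivAt_perfectSpline a hτ hx k)
    (intervalIntegrable_perfectSpline a τ k) b c

lemma perfectSpline_succ_left (hτ : ∀ i, a ≤ τ i) (k : ℕ) : perfectSpline a τ (k + 1) a = 0 := by
  have max_eq (i) : max (a - τ i) 0 = 0 := max_eq_right (by linarith [hτ i])
  simp [perfectSpline, max_eq]

lemma incrementsDominatedOn_perfectSpline_zero (a : ℝ) (τ : Fin n → ℝ) (s : Set ℝ) :
    IncrementsDominatedOn (perfectSpline a τ 0) (fun x => ∑ i, Real.sign (x - τ i)) s := by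
  have sign_dominated (c : ℝ) : IncrementsDominatedOn (fun x => Real.sign (x - c))
      (fun x => Real.sign (x - c)) s := fun x _ y _ hxy =>
    (abs_of_nonneg (sub_nonneg.2 (monotone_real_sign (by linarith)))).le
  simpa [perfectSpline] using (IncrementsDominatedOn.prod univ
    (fun i x _ => abs_real_sign_le_one (x - τ i)) fun i => sign_dominated (τ i)).const_mul
      ((-1) ^ n)

lemma sum_sign_sub_sum_sign (hτ : ∀ i, τ i ∈ Set.Ioo a b) :
    ∑ i, Real.sign (b - τ i) - ∑ i, Real.sign (a - τ i) = 2 * n := by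
  have left (i) : Real.sign (a - τ i) = -1 := Real.sign_of_neg (by linarith [(hτ i).1])
  have right (i) : Real.sign (b - τ i) = 1 := Real.sign_of_pos (by linarith [(hτ i).2])
  simp only [left, right, sum_const, card_univ, Fintype.card_fin, nsmul_eq_mul]
  ring

end PerfectSplines

section WeightedSplines

open Finset MeasureTheory

variable {n : ℕ} {τ : Fin n → ℝ} {a x : ℝ} {d : ℕ}

/-- A chain of iterated primitives whose `d`-th member is `(α + β x + γ x ^ 2) * S_d x`, where `S_d`
is the `d`-th perfect spline: by the Leibniz rule the `j`-th member is the `(d - j)`-th derivative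
of that product. -/
noncomputable def weightedSpline (a : ℝ) {n : ℕ} (τ : Fin n → ℝ) (α β γ : ℝ) (d j : ℕ) (x : ℝ) :
    ℝ :=
  (α + β * x + γ * x ^ 2) * perfectSpline a τ j x +
    ((d - j) * (β + 2 * γ * x)) * perfectSpline a τ (j + 1) x +
      (d - j) * (d - 1 - j) * γ * perfectSpline a τ (j + 2) x

variable (α β γ : ℝ)

lemma isPrimitiveOn_weightedSpline (a : ℝ) (hτ : StrictMono τ) (d j : ℕ) (b c : ℝ) :
    IsPrimitiveOn (weightedSpline a τ α β γ d (j + 1)) (weightedSpline a τ α β γ d j) b c := by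
  have S_cont := continuous_perfectSpline_succ a τ
  refine isPrimitiveOn_of_hasDerivAt_off_countable (Set.finite_range τ).countable ?_ ?_ ?_ b c
  · have := S_cont j; have := S_cont (j + 1); have := S_cont (j + 2)
    unfold weightedSpline
    fun_prop
  · intro x hx
    have S_deriv := hasDerivAt_perfectSpline a hτ hx
    have linear : HasDerivAt (fun x => β + 2 * γ * x) (2 * γ) x := by
      simpa using ((hasDerivAt_id x).const_mul (2 * γ)).const_add β
    have quadratic : HasDerivAt (fun x => α + β * x + γ * x ^ 2) (β + 2 * γ * x) x := by
      refine ((((hasDerivAt_id x).const_mul β).const_add α).add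
        ((hasDerivAt_pow 2 x).const_mul γ)).congr_deriv ?_
      norm_num
      ring
    refine (((quadratic.mul (S_deriv j)).add ((linear.const_mul _).mul (S_deriv (j + 1)))).add
      ((S_deriv (j + 2)).const_mul _)).congr_deriv ?_
    unfold weightedSpline
    push_cast
    ring
  · intro b c
    have S_int := intervalIntegrable_perfectSpline a τ j b c
    have := S_cont j; have := S_cont (j + 1)
    exact ((S_int.continuousOn_mul (by fun_prop)).add
      (Continuous.intervalIntegrable (by fun_prop) _ _)).add
        (Continuous.intervalIntegrable (by fun_prop) _ _)

lemma weightedSpline_eq_mul {j : ℕ} (hS : ∀ k, j < k → k ≤ d → perfectSpline a τ k x = 0)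
    (hj : j ≤ d) :
    weightedSpline a τ α β γ d j x = (α + β * x + γ * x ^ 2) * perfectSpline a τ j x := by
  obtain ⟨m, rfl⟩ := Nat.exists_eq_add_of_le hj
  rcases m with _ | _ | m
  · simp [weightedSpline]
  · simp [weightedSpline, hS (j + 1) (by omega) le_rfl]
  · simp [weightedSpline, hS (j + 1) (by omega) (by omega), hS (j + 2) (by omega) (by omega)]

lemma weightedSpline_self (a : ℝ) (τ : Fin n → ℝ) (d : ℕ) (x : ℝ) :
    weightedSpline a τ α β γ d d x = (α + β * x + γ * x ^ 2) * perfectSpline a τ d x :=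
  weightedSpline_eq_mul α β γ (fun _ h h' => absurd h' h.not_ge) le_rfl

lemma weightedSpline_succ_self (a : ℝ) (τ : Fin n → ℝ) (d : ℕ) (x : ℝ) :
    weightedSpline a τ α β γ d (d + 1) x =
      (α + β * x + γ * x ^ 2) * perfectSpline a τ (d + 1) x -
        (β + 2 * γ * x) * perfectSpline a τ (d + 2) x + 2 * γ * perfectSpline a τ (d + 3) x := by
  unfold weightedSpline
  push_cast
  ring

lemma abs_quadratic_le (hx : x ∈ Set.Icc (-1 : ℝ) 1) :
    |α + β * x + γ * x ^ 2| ≤ |α| + |β| + |γ| := by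
  have hx := abs_le.2 hx
  refine (abs_add_three _ _ _).trans (add_le_add_three le_rfl ?_ ?_)
  · rw [abs_mul]
    exact mul_le_of_le_one_right (abs_nonneg _) hx
  · rw [abs_mul, abs_pow]
    exact mul_le_of_le_one_right (abs_nonneg _) (pow_le_one₀ (abs_nonneg _) hx)

lemma abs_linear_le (hx : x ∈ Set.Icc (-1 : ℝ) 1) : |β + 2 * γ * x| ≤ |β| + 2 * |γ| := by
  simpa [abs_mul] using abs_quadratic_le β (2 * γ) 0 hx

lemma incrementsDominatedOn_quadratic :
    IncrementsDominatedOn (fun x => α + β * x + γ * x ^ 2) (fun x => (|β| + 2 * |γ|) * x)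
      (Set.Icc (-1) 1) := by
  intro x hx y hy hxy
  have slope := abs_linear_le β γ (x := (x + y) / 2)
    ⟨by linarith [hx.1, hy.1], by linarith [hx.2, hy.2]⟩
  rw [show α + β * y + γ * y ^ 2 - (α + β * x + γ * x ^ 2) =
    (β + 2 * γ * ((x + y) / 2)) * (y - x) by ring, abs_mul, abs_of_nonneg (sub_nonneg.2 hxy),
    ← mul_sub]
  exact mul_le_mul_of_nonneg_right slope (sub_nonneg.2 hxy)

variable {B : ℝ}

lemma abs_weightedSpline_zero_le (hd : 1 ≤ d)
    (hB₁ : ∀ x ∈ Set.Icc (-1) 1, |perfectSpline a τ 1 x| ≤ B)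
    (hB₂ : ∀ x ∈ Set.Icc (-1) 1, |perfectSpline a τ 2 x| ≤ B) (hx : x ∈ Set.Icc (-1 : ℝ) 1) :
    |weightedSpline a τ α β γ d 0 x| ≤
      |α| + |β| + |γ| + d * |β| * B + d * (d + 1) * |γ| * B := by
  have hd : (1 : ℝ) ≤ d := by exact_mod_cast hd
  have : 0 ≤ (d : ℝ) * (d - 1) * |γ| := by
    have := sub_nonneg.2 hd
    positivity
  have h₀ := abs_perfectSpline_zero_le_one a τ x
  simp only [weightedSpline, Nat.cast_zero, sub_zero, zero_add]
  refine (abs_add_three _ _ _).trans ?_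
  rw [abs_mul, abs_mul, abs_mul, abs_mul (_ * γ), abs_mul _ γ,
    abs_of_nonneg (by nlinarith : 0 ≤ (d : ℝ) * (d - 1)), Nat.abs_cast]
  calc _ ≤ (|α| + |β| + |γ|) * 1 + d * (|β| + 2 * |γ|) * B + d * (d - 1) * |γ| * B := by
        gcongr
        exacts [abs_quadratic_le α β γ hx, abs_linear_le β γ hx, hB₁ x hx, hB₂ x hx]
    _ = _ := by ring

lemma incrementsDominatedOn_weightedSpline_zero (hτ : StrictMono τ) (hd : 1 ≤ d)
    (hB₁ : ∀ x ∈ Set.Icc (-1) 1, |perfectSpline a τ 1 x| ≤ B) :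
    IncrementsDominatedOn (weightedSpline a τ α β γ d 0)
      (fun x => (|α| + |β| + |γ|) * ∑ i, Real.sign (x - τ i) +
        ((d + 1) * (|β| + 2 * |γ|) + d * (d + 1) * |γ| * B) * x) (Set.Icc (-1) 1) := by
  have hd : (1 : ℝ) ≤ d := by exact_mod_cast hd
  have S₀_le := fun x (_ : x ∈ Set.Icc (-1 : ℝ) 1) => abs_perfectSpline_zero_le_one a τ x
  have S₁ := (isPrimitiveOn_perfectSpline a hτ 0 (-1) 1).incrementsDominatedOn S₀_le
  have S₂ := (isPrimitiveOn_perfectSpline a hτ 1 (-1) 1).incrementsDominatedOn hB₁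
  have linear := incrementsDominatedOn_quadratic (d * β) (2 * d * γ) 0
  have first := (incrementsDominatedOn_quadratic α β γ).mul (fun x => abs_quadratic_le α β γ)
    (incrementsDominatedOn_perfectSpline_zero a τ _) S₀_le
  have second := linear.mul (fun x => abs_quadratic_le _ _ _) S₁ hB₁
  have third := S₂.const_mul (d * (d - 1) * γ)
  intro x hx y hy hxy
  convert ((first.add second).add third) x hx y hy hxy using 1
  · simp only [weightedSpline, Nat.cast_zero]
    ring_nf
  · rw [abs_mul _ γ, abs_mul _ γ, abs_mul _ β,
      abs_of_nonneg (by nlinarith : 0 ≤ (d : ℝ) * (d - 1)),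
      abs_of_nonneg (by positivity : (0 : ℝ) ≤ 2 * d), Nat.abs_cast, abs_zero]
    ring

end WeightedSplines

section ChebyshevSplines

open Finset

/-- The zeros of the Chebyshev polynomial `U n`, in increasing order. -/
noncomputable def chebyshevKnot (n : ℕ) (i : Fin n) : ℝ := Real.cos ((n - i) * π / (n + 1))

lemma chebyshevKnot_strictMono (n : ℕ) : StrictMono (chebyshevKnot n) := by
  intro i j hij
  have : (0 : ℝ) ≤ i := Nat.cast_nonneg _
  have hj : ((j : ℕ) : ℝ) < n := by exact_mod_cast j.is_lt
  have hij : ((i : ℕ) : ℝ) < j := by exact_mod_cast hij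
  refine Real.cos_lt_cos_of_nonneg_of_le_pi (by have := sub_nonneg.2 hj.le; positivity) ?_ ?_
  · rw [div_le_iff₀ (by positivity), mul_comm]
    exact mul_le_mul_of_nonneg_left (by linarith) Real.pi_pos.le
  · gcongr

lemma chebyshevKnot_mem_Ioo (n : ℕ) (i : Fin n) : chebyshevKnot n i ∈ Set.Ioo (-1 : ℝ) 1 := by
  have : (0 : ℝ) ≤ i := Nat.cast_nonneg _
  have hn : ((i : ℕ) : ℝ) < n := by exact_mod_cast i.is_lt
  have := sub_pos.2 hn
  have angle_pos : 0 < (n - i) * π / (n + 1) := by positivity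
  have angle_lt : (n - i) * π / (n + 1) < π := by
    rw [div_lt_iff₀ (by positivity), mul_comm]
    exact mul_lt_mul_of_pos_left (by linarith) Real.pi_pos
  constructor
  · simpa [chebyshevKnot] using Real.cos_lt_cos_of_nonneg_of_le_pi angle_pos.le le_rfl angle_lt
  · simpa [chebyshevKnot] using Real.cos_lt_cos_of_nonneg_of_le_pi le_rfl angle_lt.le angle_pos

lemma chebyshev_U_eval_eq_prod (n : ℕ) (x : ℝ) :
    (Polynomial.Chebyshev.U ℝ n).eval x = 2 ^ n * ∏ i, (x - chebyshevKnot n i) := by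
  have roots := Polynomial.Chebyshev.roots_U_real n
  have inj : Set.InjOn (fun k : ℕ => Real.cos ((k + 1) * π / (n + 1))) (range n) :=
    (range n).nodup_map_iff_injOn.1 (Polynomial.Chebyshev.roots_U_real_nodup n)
  have factor := Polynomial.C_leadingCoeff_mul_prod_multiset_X_sub_C
    (p := Polynomial.Chebyshev.U ℝ n) (by
      rw [roots, card_val, card_image_of_injOn inj, card_range,
        Polynomial.Chebyshev.natDegree_U_natCast])
  rw [← factor, roots, Polynomial.Chebyshev.leadingCoeff_U_natCast, ← Finset.prod, prod_image inj,
    Polynomial.eval_mul, Polynomial.eval_C, Polynomial.eval_prod, prod_range,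
    ← Equiv.prod_comp Fin.revPerm]
  congr! 2 with i
  rw [Polynomial.eval_sub, Polynomial.eval_X, Polynomial.eval_C, chebyshevKnot, Fin.revPerm_apply,
    Fin.val_rev, Nat.cast_sub i.is_lt]
  push_cast
  ring_nf

/-- The chain `f_k` of the perfect B-spline of order `n`, for `s = n + 1`. -/
noncomputable abbrev chebyshevSpline (n : ℕ) : ℕ → ℝ → ℝ := perfectSpline (-1) (chebyshevKnot n)

lemma fspline_eq_chebyshevSpline (n k : ℕ) {x : ℝ} (hx : x ∈ Set.Icc (-1 : ℝ) 1) :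
    fspline (n + 1) k x = chebyshevSpline n k x := by
  induction k generalizing x with
  | zero =>
    simp only [fspline, perfectSpline, Nat.add_sub_cancel, Nat.cast_add, Nat.cast_one,
      add_sub_cancel_right]
    rw [chebyshev_U_eval_eq_prod, real_sign_mul, Real.sign_of_pos (by positivity), one_mul,
      real_sign_prod]
  | succ k ih =>
    have left : (-1 : ℝ) ∈ Set.Icc (-1 : ℝ) 1 := by simp
    simp only [fspline]
    rw [intervalIntegral.integral_congr fun t ht => ih (Set.uIcc_subset_Icc left hx ht),
      (isPrimitiveOn_perfectSpline _ (chebyshevKnot_strictMono n) k _ 1).2 _ left _ hx,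
      perfectSpline_succ_left fun i => (chebyshevKnot_mem_Ioo n i).1.le, sub_zero]

lemma sqrt_two_div_two_bounds : 0.70710 < √2 / 2 ∧ √2 / 2 < 0.70711 := by
  rw [lt_div_iff₀ two_pos, div_lt_iff₀ two_pos, Real.lt_sqrt (by norm_num),
    Real.sqrt_lt' (by norm_num)]
  norm_num

lemma cos_pi_div_eight_bounds : 0.92387 < Real.cos (π / 8) ∧ Real.cos (π / 8) < 0.92389 := by
  have := sqrt_two_div_two_bounds
  rw [Real.cos_pi_div_eight, lt_div_iff₀ two_pos, div_lt_iff₀ two_pos, Real.lt_sqrt (by norm_num),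
    Real.sqrt_lt' (by norm_num)]
  constructor <;> norm_num at this ⊢ <;> linarith

lemma sin_pi_div_eight_bounds : 0.38267 < Real.sin (π / 8) ∧ Real.sin (π / 8) < 0.38269 := by
  have := sqrt_two_div_two_bounds
  rw [Real.sin_pi_div_eight, lt_div_iff₀ two_pos, div_lt_iff₀ two_pos, Real.lt_sqrt (by norm_num),
    Real.sqrt_lt' (by norm_num)]
  constructor <;> norm_num at this ⊢ <;> linarith

lemma cos_pi_div_eight_sq : Real.cos (π / 8) ^ 2 = (1 + √2 / 2) / 2 := by
  rw [Real.cos_sq, show 2 * (π / 8) = π / 4 by ring, Real.cos_pi_div_four]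
  ring

lemma sin_pi_div_eight_sq : Real.sin (π / 8) ^ 2 = (1 - √2 / 2) / 2 := by
  rw [Real.sin_sq, cos_pi_div_eight_sq]
  ring

lemma chebyshevKnot_seven : chebyshevKnot 7 = ![-Real.cos (π / 8), -(√2 / 2), -Real.sin (π / 8),
    0, Real.sin (π / 8), √2 / 2, Real.cos (π / 8)] := by
  rw [← Real.cos_pi_div_two_sub, ← Real.cos_pi_div_four, ← Real.cos_pi_div_two]
  simp only [← Real.cos_pi_sub]
  ext i
  fin_cases i <;> simp only [chebyshevKnot, Fin.reduceFinMk, Matrix.cons_val] <;> congr 1 <;>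
    norm_num <;> ring

lemma perfectSpline_succ_right {n : ℕ} {τ : Fin n → ℝ} {a b : ℝ} (hτ : ∀ i, τ i ≤ b) (k : ℕ) :
    perfectSpline a τ (k + 1) b = ((b - a) ^ (k + 1) +
      2 * ∑ i, (-1) ^ (i.val + 1) * (b - τ i) ^ (k + 1)) / (k + 1).factorial := by
  have max_eq (i) : max (b - τ i) 0 = b - τ i := max_eq_left (sub_nonneg.2 (hτ i))
  simp only [perfectSpline, max_eq]

lemma pow_eq_of_sq_eq {u w : ℝ} (hw : w ^ 2 = 1 / 2) (hu : u ^ 2 = (1 + w) / 2) :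
    u ^ 4 = 3 / 8 + w / 2 ∧ u ^ 6 = 5 / 16 + 7 * w / 16 ∧ u ^ 8 = 17 / 64 + 3 * w / 8 ∧
      u ^ 10 = 29 / 128 + 41 * w / 128 := by
  have h4 : u ^ 4 = 3 / 8 + w / 2 := by
    linear_combination (u ^ 2 + (1 + w) / 2) * hu + 1 / 4 * hw
  have h6 : u ^ 6 = 5 / 16 + 7 * w / 16 := by
    linear_combination u ^ 2 * h4 + (3 / 8 + w / 2) * hu + 1 / 4 * hw
  have h8 : u ^ 8 = 17 / 64 + 3 * w / 8 := by
    linear_combination u ^ 2 * h6 + (5 / 16 + 7 * w / 16) * hu + 7 / 32 * hw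
  exact ⟨h4, h6, h8, by linear_combination u ^ 2 * h8 + (17 / 64 + 3 * w / 8) * hu + 3 / 16 * hw⟩

lemma chebyshevSpline_seven_right : (∀ k < 7, chebyshevSpline 7 (k + 1) 1 = 0) ∧
    chebyshevSpline 7 8 1 = 1 / 322560 ∧ chebyshevSpline 7 9 1 = 1 / 322560 ∧
      chebyshevSpline 7 10 1 = 19 / 36 / 322560 := by
  have formula := perfectSpline_succ_right (a := -1) fun i => (chebyshevKnot_mem_Ioo 7 i).2.le
  simp only [Fin.sum_univ_seven, chebyshevKnot_seven, Matrix.cons_val] at formula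
  rw [← chebyshevKnot_seven] at formula
  have hw : (√2 / 2) ^ 2 = 1 / 2 := by rw [div_pow, Real.sq_sqrt zero_le_two]; norm_num
  have hc := cos_pi_div_eight_sq
  have hs : Real.sin (π / 8) ^ 2 = (1 + -(√2 / 2)) / 2 := sin_pi_div_eight_sq
  generalize √2 / 2 = w, Real.cos (π / 8) = c, Real.sin (π / 8) = s at formula hw hc hs
  have hw4 : w ^ 4 = 1 / 4 := by rw [pow_mul w 2 2, hw]; norm_num
  have hw6 : w ^ 6 = 1 / 8 := by rw [pow_mul w 2 3, hw]; norm_num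
  have hw8 : w ^ 8 = 1 / 16 := by rw [pow_mul w 2 4, hw]; norm_num
  have hw10 : w ^ 10 = 1 / 32 := by rw [pow_mul w 2 5, hw]; norm_num
  obtain ⟨hc4, hc6, hc8, hc10⟩ := pow_eq_of_sq_eq hw hc
  obtain ⟨hs4, hs6, hs8, hs10⟩ := pow_eq_of_sq_eq (by rwa [neg_sq]) hs
  refine ⟨fun k hk => ?_, ?_, ?_, ?_⟩
  · rw [chebyshevSpline, formula, div_eq_zero_iff]
    left
    interval_cases k <;> norm_num <;> linarith
  all_goals
    rw [chebyshevSpline, formula, div_eq_iff (by positivity)]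
    norm_num [Nat.factorial]
    linarith

lemma chebyshevSpline_seven_one (x : ℝ) : chebyshevSpline 7 1 x =
    1 - |x + Real.cos (π / 8)| + |x + √2 / 2| - |x + Real.sin (π / 8)| + |x| -
      |x - Real.sin (π / 8)| + |x - √2 / 2| - |x - Real.cos (π / 8)| := by
  have max_eq (t : ℝ) : max t 0 = (t + |t|) / 2 := by
    rcases abs_cases t with ⟨h, ht⟩ | ⟨h, ht⟩ <;> rw [h]
    · rw [max_eq_left ht, add_self_div_two]
    · rw [max_eq_right ht.le, add_neg_cancel, zero_div]
  simp only [chebyshevSpline, perfectSpline, zero_add, pow_one, max_eq, Fin.sum_univ_seven,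
    chebyshevKnot_seven, Matrix.cons_val, sub_neg_eq_add, sub_zero]
  generalize √2 / 2 = w, Real.cos (π / 8) = c, Real.sin (π / 8) = s
  norm_num
  ring

lemma abs_chebyshevSpline_seven_one_le (x : ℝ) (hx : x ∈ Set.Icc (-1 : ℝ) 1) :
    |chebyshevSpline 7 1 x| ≤ 1 / 5 := by
  wlog hx0 : 0 ≤ x generalizing x
  · have even : chebyshevSpline 7 1 (-x) = chebyshevSpline 7 1 x := by
      simp only [chebyshevSpline_seven_one, ← abs_neg (-x + _), ← abs_neg (-x - _), abs_neg,
        neg_add, neg_sub, neg_neg, sub_neg_eq_add]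
      ring_nf
    rw [← even]
    exact this (-x) ⟨by linarith [hx.2], by linarith [hx.1]⟩ (by linarith)
  have hw := sqrt_two_div_two_bounds
  have hc := cos_pi_div_eight_bounds
  have hs := sin_pi_div_eight_bounds
  rw [chebyshevSpline_seven_one]
  generalize √2 / 2 = w, Real.cos (π / 8) = c, Real.sin (π / 8) = s at hw hc hs
  norm_num at hw hc hs
  rw [abs_of_nonneg (by linarith : 0 ≤ x + c), abs_of_nonneg (by linarith : 0 ≤ x + w),
    abs_of_nonneg (by linarith : 0 ≤ x + s), abs_of_nonneg hx0]
  obtain ⟨-, hx1⟩ := hx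
  rw [abs_le]
  rcases abs_cases (x - s) with ⟨es, _⟩ | ⟨es, _⟩ <;>
    rcases abs_cases (x - w) with ⟨ew, _⟩ | ⟨ew, _⟩ <;>
    rcases abs_cases (x - c) with ⟨ec, _⟩ | ⟨ec, _⟩ <;>
    rw [es, ew, ec] <;> constructor <;> linarith

lemma abs_chebyshevSpline_seven_two_le (x : ℝ) (hx : x ∈ Set.Icc (-1 : ℝ) 1) :
    |chebyshevSpline 7 2 x| ≤ 1 / 5 := by
  have dominated := (isPrimitiveOn_perfectSpline (-1) (chebyshevKnot_strictMono 7) 1 (-1)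
    1).incrementsDominatedOn abs_chebyshevSpline_seven_one_le
  have left := dominated (-1) (by simp) x hx hx.1
  have right := dominated x hx 1 (by simp) hx.2
  have left_value := perfectSpline_succ_left (fun i => (chebyshevKnot_mem_Ioo 7 i).1.le) 1
  have right_value := chebyshevSpline_seven_right.1 1 (by norm_num)
  norm_num only [chebyshevSpline, left_value, right_value, sub_zero, zero_sub, abs_neg]
    at left right ⊢
  rcases le_total x 0 with _ | _ <;> linarith

end ChebyshevSplines

section SplineMoments

open Finset

variable (α β γ : ℝ) {N : ℕ} {z : ℂ}

/-- The chain of iterated primitives whose seventh member is the perfect B-spline of order `7`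
times `α + β x + γ x ^ 2`. -/
noncomputable abbrev weightedBSpline (α β γ : ℝ) : ℕ → ℝ → ℝ :=
  weightedSpline (-1) (chebyshevKnot 7) α β γ 7

lemma weightedBSpline_succ_left (j : ℕ) : weightedBSpline α β γ (j + 1) (-1) = 0 := by
  have vanish := perfectSpline_succ_left fun i => (chebyshevKnot_mem_Ioo 7 i).1.le
  simp only [weightedSpline, vanish, mul_zero, add_zero]

lemma weightedBSpline_succ_right {j : ℕ} (hj : j < 7) : weightedBSpline α β γ (j + 1) 1 = 0 := by
  have vanish (k : ℕ) (h0 : 0 < k) (h7 : k ≤ 7) :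
      perfectSpline (-1) (chebyshevKnot 7) k 1 = 0 := by
    obtain ⟨k, rfl⟩ := Nat.exists_eq_add_of_lt h0
    rw [zero_add] at h7 ⊢
    exact chebyshevSpline_seven_right.1 k h7
  rw [weightedBSpline, weightedSpline_eq_mul α β γ (fun k hk => vanish k (by omega)) hj,
    vanish _ j.succ_pos hj, mul_zero]

lemma weightedBSpline_eight_right : weightedBSpline α β γ 8 1 = (α + γ / 18) / 322560 := by
  obtain ⟨-, h8, h9, h10⟩ := chebyshevSpline_seven_right
  calc weightedBSpline α β γ 8 1
      = (α + β * 1 + γ * 1 ^ 2) * chebyshevSpline 7 8 1 -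
          (β + 2 * γ * 1) * chebyshevSpline 7 9 1 + 2 * γ * chebyshevSpline 7 10 1 :=
        weightedSpline_succ_self α β γ _ _ _ _
    _ = (α + γ / 18) / 322560 := by rw [h8, h9, h10]; ring

lemma abs_weightedBSpline_zero_left_le : |weightedBSpline α β γ 0 (-1)| ≤ |α| + |β| + |γ| := by
  have vanish := perfectSpline_succ_left fun i => (chebyshevKnot_mem_Ioo 7 i).1.le
  rw [weightedBSpline, weightedSpline_eq_mul α β γ (fun k hk _ => by
    obtain ⟨k, rfl⟩ := Nat.exists_eq_add_of_lt hk
    rw [zero_add, vanish]) (Nat.zero_le _), abs_mul]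
  exact (mul_le_of_le_one_right (abs_nonneg _) (abs_perfectSpline_zero_le_one _ _ _)).trans
    (abs_quadratic_le α β γ (by simp))

lemma abs_weightedBSpline_zero_right_le : |weightedBSpline α β γ 0 1| ≤ |α| + |β| + |γ| := by
  rw [weightedBSpline, weightedSpline_eq_mul α β γ (fun k hk hk' => by
    obtain ⟨k, rfl⟩ := Nat.exists_eq_add_of_lt hk
    rw [zero_add] at hk' ⊢
    exact chebyshevSpline_seven_right.1 k hk') (Nat.zero_le _), abs_mul]
  exact (mul_le_of_le_one_right (abs_nonneg _) (abs_perfectSpline_zero_le_one _ _ _)).trans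
    (abs_quadratic_le α β γ (by simp))

lemma gtilde_eight_grid {n : ℤ} (hn : n ∈ Icc (-(N : ℤ)) N) :
    gtilde 8 (n / (2 * ((N : ℝ) + 1))) = chebyshevSpline 7 7 (n / ((N : ℝ) + 1)) := by
  rw [mem_Icc] at hn
  have lower : -(N : ℝ) ≤ n := by exact_mod_cast hn.1
  have upper : (n : ℝ) ≤ N := by exact_mod_cast hn.2
  rw [gtilde, show 2 * ((n : ℝ) / (2 * ((N : ℝ) + 1))) = n / ((N : ℝ) + 1) by field_simp]
  refine fspline_eq_chebyshevSpline 7 _ ⟨?_, ?_⟩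
  · rw [le_div_iff₀ (by positivity)]; linarith
  · rw [div_le_iff₀ (by positivity)]; linarith

/-- The trigonometric sum of the samples of the scaled perfect B-spline, weighted by
`α + β n + γ n ^ 2`. -/
noncomputable def splineMoment (N : ℕ) (α β γ : ℝ) (z : ℂ) : ℂ :=
  ∑ n ∈ Icc (-(N : ℤ)) N,
    ((α + β * n + γ * n ^ 2 : ℝ) : ℂ) * gtilde 8 (n / (2 * ((N : ℝ) + 1))) * z ^ n

lemma sampleSum_weightedBSpline (hz : z ≠ 0) :
    sampleSum (-1) (1 / ((N : ℝ) + 1)) (2 * (N + 1)) z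
        (weightedBSpline α (β * (N + 1)) (γ * (N + 1) ^ 2) 7) 0 =
      z ^ (N + 1) * splineMoment N α β γ z := by
  have first : weightedBSpline α (β * (N + 1)) (γ * (N + 1) ^ 2) 7
      (-1 + (0 : ℕ) * (1 / ((N : ℝ) + 1)) + 0) = 0 := by
    simpa using weightedBSpline_succ_left α _ _ 6
  rw [sampleSum, show 2 * (N + 1) = (2 * N + 1) + 1 by ring, sum_range_succ', first,
    Complex.ofReal_zero, zero_mul, add_zero, splineMoment, mul_sum]
  refine sum_bij (fun i _ => (i : ℤ) - N) ?_ ?_ ?_ ?_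
  · intro i hi
    rw [mem_range] at hi
    rw [mem_Icc]; omega
  · intro i _ j _ h
    simpa using h
  · intro n hn
    rw [mem_Icc] at hn
    exact ⟨(n + N).toNat, by rw [mem_range]; omega, by omega⟩
  · intro i hi
    have mem : (i : ℤ) - N ∈ Icc (-(N : ℤ)) N := by
      rw [mem_range] at hi
      rw [mem_Icc]; omega
    have node : -1 + (i + 1 : ℕ) * (1 / ((N : ℝ) + 1)) + 0 =
        ((i : ℤ) - N : ℤ) / ((N : ℝ) + 1) := by
      push_cast; field_simp; ring
    have power : z ^ (i + 1) = z ^ (N + 1) * z ^ ((i : ℤ) - N) := by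
      rw [zpow_sub₀ hz, zpow_natCast, zpow_natCast, pow_succ, pow_succ]
      field_simp
    have weight (n : ℝ) : α + β * (N + 1) * (n / ((N : ℝ) + 1)) +
        γ * (N + 1) ^ 2 * (n / ((N : ℝ) + 1)) ^ 2 = α + β * n + γ * n ^ 2 := by field_simp
    rw [gtilde_eight_grid mem, node, weightedBSpline, weightedSpline_self, weight, power]
    push_cast
    ring

lemma norm_one_sub_pow_mul_norm_splineMoment_le (hz : ‖z‖ = 1) :
    ((N : ℝ) + 1) ^ 7 * (‖1 - z‖ ^ 8 * ‖splineMoment N α β γ z‖) ≤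
      16 * |α| + 32 * |β| * (N + 1) + 71 * |γ| * (N + 1) ^ 2 := by
  have hz0 : z ≠ 0 := by rintro rfl; simp at hz
  set k := (N : ℝ) + 1 with hk
  have k_pos : 0 < k := by positivity
  have decay := norm_one_sub_pow_mul_norm_sampleSum_le (z := z) (x := 0)
    (fun j _ => isPrimitiveOn_weightedSpline α (β * k) (γ * k ^ 2) (-1)
      (chebyshevKnot_strictMono 7) 7 j (-1) 1)
    (fun j _ => weightedBSpline_succ_left _ _ _ j)
    (fun j hj => weightedBSpline_succ_right _ _ _ hj)
    (incrementsDominatedOn_weightedSpline_zero _ _ _ (chebyshevKnot_strictMono 7) (by norm_num)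
      abs_chebyshevSpline_seven_one_le)
    (m := 2 * (N + 1)) (h := 1 / k) (by rw [hk]; push_cast; field_simp; ring) (by positivity) hz
    (by simp [k_pos.le])
  rw [sampleSum_weightedBSpline α β γ hz0, norm_mul, norm_pow, hz, one_pow, one_mul] at decay
  have left := abs_weightedBSpline_zero_left_le α (β * k) (γ * k ^ 2)
  have right := abs_weightedBSpline_zero_right_le α (β * k) (γ * k ^ 2)
  have jumps := sum_sign_sub_sum_sign (chebyshevKnot_mem_Ioo 7)
  rw [abs_mul β, abs_mul γ, abs_of_pos k_pos, abs_of_pos (by positivity : 0 < k ^ 2)]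
    at decay left right
  rw [one_div, inv_pow, inv_mul_eq_div, le_div_iff₀' (by positivity)] at decay
  refine decay.trans ?_
  have : 0 ≤ |γ| * k ^ 2 := by positivity
  push_cast at jumps ⊢
  linear_combination left + right + (|α| + |β| * k + |γ| * k ^ 2) * jumps + 0.6 * this

lemma norm_splineMoment_one_sub_le :
    ‖1 / ((N : ℝ) + 1) * splineMoment N α β γ 1 -
        (((α + γ * (N + 1) ^ 2 / 18) / 322560 : ℝ) : ℂ)‖ ≤
      2 * (1 / ((N : ℝ) + 1)) ^ 7 * (|α| + 2.4 * |β| * (N + 1) + 12.2 * |γ| * (N + 1) ^ 2) := by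
  have k_pos : (0 : ℝ) < N + 1 := by positivity
  have left : weightedSpline (-1) (chebyshevKnot 7) α (β * (N + 1)) (γ * (N + 1) ^ 2) 7 (6 + 2)
    (-1) = 0 := weightedBSpline_succ_left _ _ _ 7
  have right : weightedSpline (-1) (chebyshevKnot 7) α (β * (N + 1)) (γ * (N + 1) ^ 2) 7 (6 + 2)
    1 = (α + γ * (N + 1) ^ 2 / 18) / 322560 := weightedBSpline_eight_right _ _ _
  have mean := norm_mul_sampleSum_one_sub_le_pow (x := 0) (n := 6)
    (fun j _ => isPrimitiveOn_weightedSpline α (β * (N + 1)) (γ * (N + 1) ^ 2) (-1)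
      (chebyshevKnot_strictMono 7) 7 j (-1) 1)
    (fun j _ => weightedBSpline_succ_left _ _ _ j)
    (fun j hj => weightedBSpline_succ_right _ _ _ (by omega))
    (fun x hx => abs_weightedSpline_zero_le _ _ _ (by norm_num)
      abs_chebyshevSpline_seven_one_le abs_chebyshevSpline_seven_two_le hx)
    (m := 2 * (N + 1)) (h := 1 / ((N : ℝ) + 1)) (by push_cast; field_simp; ring) (by positivity)
    (by simp [k_pos.le])
  rw [sampleSum_weightedBSpline α β γ one_ne_zero, left, right, sub_zero, one_pow, one_mul] at mean
  rw [abs_mul β, abs_mul γ, abs_of_pos k_pos, abs_of_pos (by positivity : 0 < ((N : ℝ) + 1) ^ 2)]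
    at mean
  push_cast at mean ⊢
  refine mean.trans_eq ?_
  ring

end SplineMoments

section ChebyshevSums

open Finset Polynomial

variable (S : Finset ℤ) (w : ℤ → ℝ) (t : ℝ)

/-- The trigonometric polynomial `∑ w n * z ^ n` over the frequencies `n ∈ S`. -/
noncomputable def trigSum (z : ℂ) : ℂ := ∑ n ∈ S, (w n : ℂ) * z ^ n

/-- The algebraic polynomial in `cos t` that represents the real part of `trigSum S w` at
`exp (t * I)`. -/
noncomputable def chebyshevSum : ℝ[X] := ∑ n ∈ S, C (w n) * Chebyshev.T ℝ n

lemma trigSum_exp : trigSum S w (Complex.exp (t * Complex.I)) =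
    (∑ n ∈ S, w n * Real.cos (n * t) : ℝ) + (∑ n ∈ S, w n * Real.sin (n * t) : ℝ) * Complex.I := by
  push_cast
  rw [trigSum, sum_mul, ← sum_add_distrib]
  refine sum_congr rfl fun n _ => ?_
  rw [← Complex.exp_int_mul, ← mul_assoc, Complex.exp_mul_I]
  ring

lemma trigSum_exp_re : (trigSum S w (Complex.exp (t * Complex.I))).re =
    ∑ n ∈ S, w n * Real.cos (n * t) := by
  rw [trigSum_exp, Complex.add_re, Complex.ofReal_re, Complex.re_ofReal_mul, Complex.I_re, mul_zero,
    add_zero]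

lemma trigSum_exp_im : (trigSum S w (Complex.exp (t * Complex.I))).im =
    ∑ n ∈ S, w n * Real.sin (n * t) := by
  rw [trigSum_exp, Complex.add_im, Complex.ofReal_im, Complex.im_ofReal_mul, Complex.I_im, mul_one,
    zero_add]

lemma eval_chebyshevSum_cos :
    (chebyshevSum S w).eval (Real.cos t) = ∑ n ∈ S, w n * Real.cos (n * t) := by
  simp [chebyshevSum, eval_finsetSum, Chebyshev.T_real_cos]

lemma eval_derivative_chebyshevSum_cos_mul_sin :
    (chebyshevSum S w).derivative.eval (Real.cos t) * Real.sin t =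
      ∑ n ∈ S, n * w n * Real.sin (n * t) := by
  have chain := ((chebyshevSum S w).hasDerivAt (Real.cos t)).comp t (Real.hasDerivAt_cos t)
  have termwise : HasDerivAt (fun t => ∑ n ∈ S, w n * Real.cos (n * t))
      (∑ n ∈ S, w n * (-Real.sin (n * t) * (n * 1))) t :=
    HasDerivAt.fun_sum fun n _ => (((hasDerivAt_id t).const_mul (n : ℝ)).cos).const_mul (w n)
  have eq := chain.unique (termwise.congr_of_eventuallyEq
    (Filter.Eventually.of_forall (eval_chebyshevSum_cos S w)))
  rw [mul_neg, neg_eq_iff_eq_neg] at eq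
  rw [eq, ← sum_neg_distrib]
  exact sum_congr rfl fun n _ => by ring

lemma eval_derivative_two_chebyshevSum_cos :
    (1 - Real.cos t ^ 2) * (chebyshevSum S w).derivative.derivative.eval (Real.cos t) -
      Real.cos t * (chebyshevSum S w).derivative.eval (Real.cos t) =
      -∑ n ∈ S, n ^ 2 * w n * Real.cos (n * t) := by
  have product := (((chebyshevSum S w).derivative.hasDerivAt (Real.cos t)).comp t
    (Real.hasDerivAt_cos t)).mul (Real.hasDerivAt_sin t)
  have termwise : HasDerivAt (fun t => ∑ n ∈ S, n * w n * Real.sin (n * t))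
      (∑ n ∈ S, n * w n * (Real.cos (n * t) * (n * 1))) t :=
    HasDerivAt.fun_sum fun n _ => (((hasDerivAt_id t).const_mul (n : ℝ)).sin).const_mul (n * w n)
  have eq := product.unique (termwise.congr_of_eventuallyEq
    (Filter.Eventually.of_forall (eval_derivative_chebyshevSum_cos_mul_sin S w)))
  have reorder : ∑ n ∈ S, (n : ℝ) ^ 2 * w n * Real.cos (n * t) =
      ∑ n ∈ S, n * w n * (Real.cos (n * t) * (n * 1)) := sum_congr rfl fun n _ => by ring
  rw [reorder, ← eq, ← Real.sin_sq, Function.comp]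
  ring

lemma abs_eval_chebyshevSum_cos_le : |(chebyshevSum S w).eval (Real.cos t)| ≤
    ‖trigSum S w (Complex.exp (t * Complex.I))‖ := by
  rw [eval_chebyshevSum_cos, ← trigSum_exp_re]
  exact Complex.abs_re_le_norm _

lemma abs_eval_derivative_chebyshevSum_cos_mul_sin_le :
    |(chebyshevSum S w).derivative.eval (Real.cos t) * Real.sin t| ≤
      ‖trigSum S (fun n => n * w n) (Complex.exp (t * Complex.I))‖ := by
  rw [eval_derivative_chebyshevSum_cos_mul_sin, ← trigSum_exp_im S fun n => n * w n]
  exact Complex.abs_im_le_norm _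

lemma abs_eval_derivative_two_chebyshevSum_cos_le :
    |(1 - Real.cos t ^ 2) * (chebyshevSum S w).derivative.derivative.eval (Real.cos t) -
      Real.cos t * (chebyshevSum S w).derivative.eval (Real.cos t)| ≤
      ‖trigSum S (fun n => n ^ 2 * w n) (Complex.exp (t * Complex.I))‖ := by
  rw [eval_derivative_two_chebyshevSum_cos, abs_neg, ← trigSum_exp_re S fun n => n ^ 2 * w n]
  exact Complex.abs_re_le_norm _

lemma eval_chebyshevSum_one : (chebyshevSum S w).eval 1 = ∑ n ∈ S, w n := by
  simpa using eval_chebyshevSum_cos S w 0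

lemma eval_derivative_chebyshevSum_one :
    (chebyshevSum S w).derivative.eval 1 = ∑ n ∈ S, n ^ 2 * w n := by
  simpa using eval_derivative_two_chebyshevSum_cos S w 0

lemma norm_one_sub_exp_sq : ‖1 - Complex.exp (t * Complex.I)‖ ^ 2 = 2 - 2 * Real.cos t := by
  rw [Complex.exp_mul_I, ← Complex.ofReal_cos, ← Complex.ofReal_sin, ← Complex.normSq_eq_norm_sq,
    Complex.normSq_apply]
  simp only [Complex.sub_re, Complex.sub_im, Complex.add_re, Complex.add_im, Complex.one_re,
    Complex.one_im, Complex.re_ofReal_mul, Complex.im_ofReal_mul, Complex.ofReal_re,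
    Complex.ofReal_im, Complex.I_re, Complex.I_im]
  linear_combination Real.sin_sq_add_cos_sq t

lemma norm_one_sub_exp_pow_eight :
    ‖1 - Complex.exp (t * Complex.I)‖ ^ 8 = (2 - 2 * Real.cos t) ^ 4 := by
  rw [← norm_one_sub_exp_sq, ← pow_mul]

end ChebyshevSums

section KernelPolynomial

open Finset Polynomial

/-- The Fourier coefficients of the trigonometric kernel `sigmaT s N`. -/
noncomputable def kernelCoeff (s N : ℕ) (n : ℤ) : ℝ :=
  gtilde s (n / (2 * ((N : ℝ) + 1))) / gnorm s N

/-- The polynomial `P` with `sigmaT s N t = P (cos t)`. -/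
noncomputable def kernelPolynomial (s N : ℕ) : ℝ[X] :=
  chebyshevSum (Icc (-(N : ℤ)) N) (kernelCoeff s N)

lemma sigmaT_eq_eval_cos (s N : ℕ) (t : ℝ) :
    sigmaT s N t = (kernelPolynomial s N).eval (Real.cos t) := by
  rw [kernelPolynomial, eval_chebyshevSum_cos, ← trigSum_exp_re, sigmaT, trigSum, mul_sum]
  congr 1
  refine sum_congr rfl fun n _ => ?_
  rw [← Complex.exp_int_mul, kernelCoeff]
  push_cast
  ring_nf

variable {N : ℕ} {z : ℂ}

lemma splineMoment_one_zero_zero_one : splineMoment N 1 0 0 1 = gnorm 8 N := by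
  simp [splineMoment, gnorm]

lemma one_div_pow_seven_le (hN : 20 ≤ N) : (1 / ((N : ℝ) + 1)) ^ 7 ≤ 1 / 1801088541 := by
  have hN : (20 : ℝ) ≤ N := by exact_mod_cast hN
  calc (1 / ((N : ℝ) + 1)) ^ 7 ≤ (1 / 21) ^ 7 := by gcongr; linarith
    _ = _ := by norm_num

lemma abs_gnorm_div_sub_le (hN : 20 ≤ N) :
    |gnorm 8 N / (N + 1) - 1 / 322560| ≤ 0.0004 / 322560 := by
  have mean := norm_splineMoment_one_sub_le (N := N) 1 0 0
  rw [splineMoment_one_zero_zero_one] at mean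
  have pow_le := one_div_pow_seven_le hN
  have cast : (1 / ((N : ℝ) + 1) * (gnorm 8 N : ℂ) -
      (((1 + 0 * ((N : ℝ) + 1) ^ 2 / 18) / 322560 : ℝ) : ℂ)) =
      ((gnorm 8 N / (N + 1) - 1 / 322560 : ℝ) : ℂ) := by
    push_cast
    ring
  rw [cast, Complex.norm_real, Real.norm_eq_abs] at mean
  refine mean.trans ?_
  norm_num at pow_le ⊢
  linarith

lemma le_gnorm (hN : 20 ≤ N) : 0.9996 / 322560 * (N + 1) ≤ gnorm 8 N := by
  have := (abs_le.1 (abs_gnorm_div_sub_le hN)).1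
  rw [← le_div_iff₀ (by positivity)]
  linarith

lemma gnorm_le (hN : 20 ≤ N) : gnorm 8 N ≤ 1.0004 / 322560 * (N + 1) := by
  have := (abs_le.1 (abs_gnorm_div_sub_le hN)).2
  rw [← div_le_iff₀ (by positivity)]
  linarith

lemma gnorm_pos (hN : 20 ≤ N) : 0 < gnorm 8 N :=
  lt_of_lt_of_le (by positivity) (le_gnorm hN)

lemma gnorm_mul_trigSum_kernelCoeff (hN : 20 ≤ N) (α β γ : ℝ) (z : ℂ) :
    gnorm 8 N * trigSum (Icc (-(N : ℤ)) N)
      (fun n => (α + β * n + γ * n ^ 2) * kernelCoeff 8 N n) z = splineMoment N α β γ z := by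
  have hg : (gnorm 8 N : ℂ) ≠ 0 := Complex.ofReal_ne_zero.2 (gnorm_pos hN).ne'
  rw [trigSum, splineMoment, mul_sum]
  refine sum_congr rfl fun n _ => ?_
  rw [kernelCoeff]
  push_cast
  field_simp

lemma norm_one_sub_pow_mul_norm_trigSum_kernelCoeff_le (hN : 20 ≤ N) (α β γ : ℝ) (hz : ‖z‖ = 1) :
    ((N : ℝ) + 1) ^ 8 * (‖1 - z‖ ^ 8 * ‖trigSum (Icc (-(N : ℤ)) N)
      (fun n => (α + β * n + γ * n ^ 2) * kernelCoeff 8 N n) z‖) ≤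
      5200000 * |α| + 10400000 * |β| * (N + 1) + 23000000 * |γ| * (N + 1) ^ 2 := by
  have decay := norm_one_sub_pow_mul_norm_splineMoment_le (N := N) α β γ hz
  rw [← gnorm_mul_trigSum_kernelCoeff hN, norm_mul, Complex.norm_real, Real.norm_eq_abs,
    abs_of_pos (gnorm_pos hN)] at decay
  have lower := le_gnorm hN
  set r := ‖trigSum (Icc (-(N : ℤ)) N) (fun n => (α + β * n + γ * n ^ 2) * kernelCoeff 8 N n) z‖
  have scaled : 0.9996 / 322560 * (((N : ℝ) + 1) ^ 8 * (‖1 - z‖ ^ 8 * r)) ≤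
      16 * |α| + 32 * |β| * (N + 1) + 71 * |γ| * (N + 1) ^ 2 :=
    calc 0.9996 / 322560 * (((N : ℝ) + 1) ^ 8 * (‖1 - z‖ ^ 8 * r))
        = ((N : ℝ) + 1) ^ 7 * (‖1 - z‖ ^ 8 * ((0.9996 / 322560 * (N + 1)) * r)) := by ring
      _ ≤ ((N : ℝ) + 1) ^ 7 * (‖1 - z‖ ^ 8 * (gnorm 8 N * r)) := by gcongr
      _ ≤ _ := decay
  have hα := abs_nonneg α
  have hβ : 0 ≤ |β| * ((N : ℝ) + 1) := by positivity
  have hγ : 0 ≤ |γ| * ((N : ℝ) + 1) ^ 2 := by positivity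
  linarith

lemma eval_kernelPolynomial_one (hN : 20 ≤ N) : (kernelPolynomial 8 N).eval 1 = 1 := by
  simp only [kernelPolynomial, eval_chebyshevSum_one, kernelCoeff]
  rw [← sum_div]
  exact div_self (gnorm_pos hN).ne'

lemma le_eval_derivative_kernelPolynomial_one (hN : 20 ≤ N) :
    0.051 * ((N : ℝ) + 1) ^ 2 ≤ (kernelPolynomial 8 N).derivative.eval 1 := by
  rw [kernelPolynomial, eval_derivative_chebyshevSum_one]
  have mean := norm_splineMoment_one_sub_le (N := N) 0 0 1
  rw [← gnorm_mul_trigSum_kernelCoeff hN] at mean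
  set m := ∑ n ∈ Icc (-(N : ℤ)) N, n ^ 2 * kernelCoeff 8 N n with hm
  have moment : trigSum (Icc (-(N : ℤ)) N)
      (fun n => (0 + 0 * n + 1 * n ^ 2) * kernelCoeff 8 N n) 1 = (m : ℂ) := by
    simp [trigSum, hm]
  have cast : (1 / ((N : ℝ) + 1) * ((gnorm 8 N : ℂ) * m) -
      (((0 + 1 * ((N : ℝ) + 1) ^ 2 / 18) / 322560 : ℝ) : ℂ)) =
      ((gnorm 8 N / (N + 1) * m - ((N : ℝ) + 1) ^ 2 / 18 / 322560 : ℝ) : ℂ) := by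
    push_cast
    ring
  rw [moment, cast, Complex.norm_real, Real.norm_eq_abs, abs_zero, abs_one] at mean
  have error_le : 2 * (1 / ((N : ℝ) + 1)) ^ 7 *
      (0 + 2.4 * 0 * (N + 1) + 12.2 * 1 * (N + 1) ^ 2) ≤
        24.4 / 1801088541 * ((N : ℝ) + 1) ^ 2 := by
    linear_combination 24.4 * ((N : ℝ) + 1) ^ 2 * one_div_pow_seven_le hN
  have lower := (abs_le.1 (mean.trans error_le)).1
  have upper : gnorm 8 N / (N + 1) ≤ 1.0004 / 322560 := by
    rw [div_le_iff₀ (by positivity)]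
    exact gnorm_le hN
  have ratio_pos : 0 < gnorm 8 N / (N + 1) := div_pos (gnorm_pos hN) (by positivity)
  refine le_of_mul_le_mul_left ?_ ratio_pos
  have := mul_le_mul_of_nonneg_right upper (by positivity : 0 ≤ 0.051 * ((N : ℝ) + 1) ^ 2)
  have sq_nonneg : 0 ≤ ((N : ℝ) + 1) ^ 2 := by positivity
  linarith

variable {c : ℝ}

lemma eval_kernelPolynomial_decay (hN : 20 ≤ N) (hc : c ∈ Set.Icc (-1 : ℝ) 1) :
    ((N : ℝ) + 1) ^ 8 * ((2 - 2 * c) ^ 4 * |(kernelPolynomial 8 N).eval c|) ≤ 5200000 := by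
  obtain ⟨t, rfl⟩ : ∃ t, Real.cos t = c := ⟨Real.arccos c, Real.cos_arccos hc.1 hc.2⟩
  have decay := norm_one_sub_pow_mul_norm_trigSum_kernelCoeff_le hN 1 0 0
    (Complex.norm_exp_ofReal_mul_I t)
  simp only [norm_one_sub_exp_pow_eight, zero_mul, add_zero, one_mul, mul_zero, abs_zero, abs_one,
    mul_one] at decay
  refine le_trans ?_ decay
  gcongr
  exact abs_eval_chebyshevSum_cos_le _ _ _

lemma eval_derivative_kernelPolynomial_decay (hN : 20 ≤ N) (hc : c ∈ Set.Icc (-1 : ℝ) 1) :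
    ((N : ℝ) + 1) ^ 8 * ((2 - 2 * c) ^ 4 *
      (|(kernelPolynomial 8 N).derivative.eval c| * √(1 - c ^ 2))) ≤ 10400000 * (N + 1) := by
  obtain ⟨t, rfl⟩ : ∃ t, Real.cos t = c := ⟨Real.arccos c, Real.cos_arccos hc.1 hc.2⟩
  have decay := norm_one_sub_pow_mul_norm_trigSum_kernelCoeff_le hN 0 1 0
    (Complex.norm_exp_ofReal_mul_I t)
  simp only [norm_one_sub_exp_pow_eight, zero_mul, add_zero, zero_add, one_mul, mul_zero, abs_zero,
    abs_one, mul_one] at decay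
  rw [← Real.sin_sq, Real.sqrt_sq_eq_abs, ← abs_mul]
  refine le_trans ?_ decay
  gcongr
  exact abs_eval_derivative_chebyshevSum_cos_mul_sin_le _ _ _

lemma eval_derivative_two_kernelPolynomial_decay (hN : 20 ≤ N) (hc : c ∈ Set.Icc (-1 : ℝ) 1) :
    ((N : ℝ) + 1) ^ 8 * ((2 - 2 * c) ^ 4 *
      |(1 - c ^ 2) * (kernelPolynomial 8 N).derivative.derivative.eval c -
        c * (kernelPolynomial 8 N).derivative.eval c|) ≤ 23000000 * (N + 1) ^ 2 := by
  obtain ⟨t, rfl⟩ : ∃ t, Real.cos t = c := ⟨Real.arccos c, Real.cos_arccos hc.1 hc.2⟩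
  have decay := norm_one_sub_pow_mul_norm_trigSum_kernelCoeff_le hN 0 0 1
    (Complex.norm_exp_ofReal_mul_I t)
  simp only [norm_one_sub_exp_pow_eight, zero_mul, add_zero, zero_add, one_mul, mul_zero, abs_zero,
    abs_one, mul_one] at decay
  refine le_trans ?_ decay
  gcongr
  exact abs_eval_derivative_two_chebyshevSum_cos_le _ _ _

end KernelPolynomial

section MatrixExponential

open Matrix

variable {n : Type*} [Fintype n] [DecidableEq n] {A : Matrix n n ℝ}

lemma exp_transpose_mul_exp_of_skew (hA : Aᵀ = -A) :
    (NormedSpace.exp A)ᵀ * NormedSpace.exp A = 1 := by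
  rw [← exp_transpose, hA, Matrix.exp_neg]
  exact nonsing_inv_mul _ ((isUnit_iff_isUnit_det _).1 (isUnit_exp A))

/- `exp A` is the square of the orthogonal matrix `exp (A / 2)`, so its determinant is `1` rather
than `-1`. -/
lemma det_exp_of_skew (hA : Aᵀ = -A) : (NormedSpace.exp A).det = 1 := by
  have half : ((1 / 2 : ℝ) • A)ᵀ = -((1 / 2 : ℝ) • A) := by rw [transpose_smul, hA, smul_neg]
  have det_half := congrArg det (exp_transpose_mul_exp_of_skew half)
  rwa [det_mul, det_transpose, det_one, ← det_mul, ← exp_add_of_commute _ _ (Commute.refl _),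
    ← add_smul, add_halves, one_smul] at det_half

open scoped Matrix.Norms.Operator in
lemma hasDerivAt_trace_mul_exp (B A : Matrix n n ℝ) :
    HasDerivAt (fun t : ℝ => trace (B * NormedSpace.exp (t • A))) (trace (B * A)) 0 := by
  have exp_deriv := hasDerivAt_exp_smul_const (𝕂 := ℝ) A (0 : ℝ)
  rw [zero_smul, NormedSpace.exp_zero, one_mul] at exp_deriv
  exact (LinearMap.toContinuousLinearMap
    (traceLinearMap n ℝ ℝ ∘ₗ LinearMap.mulLeft ℝ B)).hasFDerivAt.comp_hasDerivAt (0 : ℝ) exp_deriv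

lemma trace_transpose_mul_comm {m n R : Type*} [Fintype m] [Fintype n] [CommSemiring R]
    (A B : Matrix m n R) : trace (Aᵀ * B) = trace (Bᵀ * A) := by
  rw [← trace_transpose, transpose_mul, transpose_transpose]

lemma trace_transpose_mul_skew {n R : Type*} [Fintype n] [CommRing R] {A : Matrix n n R}
    (hA : Aᵀ = -A) (B : Matrix n n R) : trace (Bᵀ * A) = -trace (B * A) := by
  rw [trace_transpose_mul_comm, hA, neg_mul, trace_neg, trace_mul_comm]

end MatrixExponential

section Rotations

open Matrix

variable {x y z : Mat3}

lemma IsSO3.inv_eq (hx : IsSO3 x) : x⁻¹ = xᵀ := inv_eq_left_inv hx.1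

lemma IsSO3.mul_transpose (hx : IsSO3 x) : x * xᵀ = 1 := mul_eq_one_comm.1 hx.1

lemma IsSO3.transpose (hx : IsSO3 x) : IsSO3 xᵀ :=
  ⟨by rw [transpose_transpose, hx.mul_transpose], by rw [det_transpose, hx.2]⟩

lemma IsSO3.mul (hx : IsSO3 x) (hy : IsSO3 y) : IsSO3 (x * y) := by
  refine ⟨?_, by rw [det_mul, hx.2, hy.2, one_mul]⟩
  rw [transpose_mul, Matrix.mul_assoc, ← Matrix.mul_assoc xᵀ, hx.1, Matrix.one_mul, hy.1]

lemma IsSO3.transpose_eq_adjugate (hz : IsSO3 z) : zᵀ = z.adjugate := by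
  rw [← hz.inv_eq, inv_def, hz.2, Ring.inverse_one, one_smul]

lemma Lgen_transpose (i : Fin 3) : (Lgen i)ᵀ = -Lgen i := by
  ext a b
  fin_cases i <;> fin_cases a <;> fin_cases b <;> simp [Lgen]

lemma isSO3_exp_Lgen (t : ℝ) (i : Fin 3) : IsSO3 (NormedSpace.exp (t • Lgen i)) :=
  have skew : (t • Lgen i)ᵀ = -(t • Lgen i) := by rw [transpose_smul, Lgen_transpose, smul_neg]
  ⟨exp_transpose_mul_exp_of_skew skew, det_exp_of_skew skew⟩

/-- The rotation matrix of the quaternion with components `q`. -/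
def quatMat (q : Fin 4 → ℝ) : Mat3 :=
  !![q 0 ^ 2 + q 1 ^ 2 - q 2 ^ 2 - q 3 ^ 2, 2 * (q 1 * q 2 - q 0 * q 3),
      2 * (q 1 * q 3 + q 0 * q 2);
    2 * (q 1 * q 2 + q 0 * q 3), q 0 ^ 2 - q 1 ^ 2 + q 2 ^ 2 - q 3 ^ 2,
      2 * (q 2 * q 3 - q 0 * q 1);
    2 * (q 1 * q 3 - q 0 * q 2), 2 * (q 2 * q 3 + q 0 * q 1),
      q 0 ^ 2 - q 1 ^ 2 - q 2 ^ 2 + q 3 ^ 2]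

/-- The matrix `4 q qᵀ`, where `q` is either of the two unit quaternions of the rotation `z`. -/
def quatGram (z : Mat3) : Matrix (Fin 4) (Fin 4) ℝ :=
  !![1 + z 0 0 + z 1 1 + z 2 2, z 2 1 - z 1 2, z 0 2 - z 2 0, z 1 0 - z 0 1;
    z 2 1 - z 1 2, 1 + z 0 0 - z 1 1 - z 2 2, z 0 1 + z 1 0, z 0 2 + z 2 0;
    z 0 2 - z 2 0, z 0 1 + z 1 0, 1 - z 0 0 + z 1 1 - z 2 2, z 1 2 + z 2 1;
    z 1 0 - z 0 1, z 0 2 + z 2 0, z 1 2 + z 2 1, 1 - z 0 0 - z 1 1 + z 2 2]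

lemma IsSO3.quatGram_mul_quatGram (hz : IsSO3 z) (i j k : Fin 4) :
    quatGram z i i * quatGram z j k = quatGram z i j * quatGram z i k := by
  have columns (a b) := congrFun (congrFun hz.1 a) b
  have rows (a b) := congrFun (congrFun hz.mul_transpose a) b
  have cofactors (a b) := congrFun (congrFun hz.transpose_eq_adjugate a) b
  simp only [Fin.forall_fin_succ, mul_apply, transpose_apply, Fin.sum_univ_three,
    Fin.succ_zero_eq_one, Fin.succ_one_eq_two, IsEmpty.forall_iff, and_true, one_apply,
    Fin.reduceEq, zero_ne_one, reduceIte, adjugate_fin_three, of_apply, cons_val]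
    at columns rows cofactors
  obtain ⟨⟨_, _, _⟩, ⟨-, _, _⟩, -, -, _⟩ := columns
  obtain ⟨⟨_, _, _⟩, ⟨-, _, _⟩, -, -, _⟩ := rows
  obtain ⟨⟨_, _, _⟩, ⟨_, _, _⟩, _, _, _⟩ := cofactors
  fin_cases i <;> fin_cases j <;> fin_cases k <;> simp [quatGram] <;> linarith

lemma trace_quatGram (z : Mat3) : trace (quatGram z) = 4 := by
  simp only [trace, diag, Fin.sum_univ_four, quatGram, of_apply, cons_val]
  ring

lemma eq_quatMat_of_quatGram_eq {q : Fin 4 → ℝ} (h : ∀ j k, quatGram z j k = 4 * (q j * q k)) :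
    z = quatMat q := by
  simp only [quatGram, of_apply, Fin.forall_fin_succ, Fin.succ_zero_eq_one, Fin.succ_one_eq_two,
    Fin.reduceSucc, IsEmpty.forall_iff, and_true, cons_val] at h
  ext a b
  fin_cases a <;> fin_cases b <;> simp [quatMat] <;> linarith

lemma IsSO3.exists_quat (hz : IsSO3 z) : ∃ q : Fin 4 → ℝ, ∑ i, q i ^ 2 = 1 ∧ z = quatMat q := by
  obtain ⟨i, -, hi⟩ : ∃ i ∈ Finset.univ, 0 < quatGram z i i :=
    Finset.exists_lt_of_sum_lt (by
      rw [Finset.sum_const_zero]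
      exact zero_lt_four.trans_eq (trace_quatGram z).symm)
  set q : Fin 4 → ℝ := fun j => quatGram z i j / (2 * √(quatGram z i i)) with hq
  have gram (j k) : quatGram z j k = 4 * (q j * q k) := by
    have sqrt_ne : √(quatGram z i i) ≠ 0 := (Real.sqrt_pos.2 hi).ne'
    rw [hq, div_mul_div_comm, ← hz.quatGram_mul_quatGram i j k]
    field_simp
    rw [Real.sq_sqrt hi.le]
    ring
  refine ⟨q, ?_, eq_quatMat_of_quatGram_eq gram⟩
  have trace_eq : trace (quatGram z) = 4 * ∑ j, q j ^ 2 := by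
    rw [trace, Finset.mul_sum]
    exact Finset.sum_congr rfl fun j _ => by rw [diag, gram, sq]
  linarith [trace_quatGram z]

lemma trace_quatMat (q : Fin 4 → ℝ) (hq : ∑ i, q i ^ 2 = 1) :
    trace (quatMat q) = 4 * q 0 ^ 2 - 1 := by
  rw [Fin.sum_univ_four] at hq
  simp only [trace_fin_three, quatMat, of_apply, cons_val]
  linarith

lemma trace_quatMat_transpose_mul (p q : Fin 4 → ℝ) (hp : ∑ i, p i ^ 2 = 1)
    (hq : ∑ i, q i ^ 2 = 1) :
    trace ((quatMat p)ᵀ * quatMat q) = 4 * (∑ i, p i * q i) ^ 2 - 1 := by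
  rw [Fin.sum_univ_four] at hp hq ⊢
  have norms : (p 0 ^ 2 + p 1 ^ 2 + p 2 ^ 2 + p 3 ^ 2) *
      (q 0 ^ 2 + q 1 ^ 2 + q 2 ^ 2 + q 3 ^ 2) = 1 := by rw [hp, hq, one_mul]
  rw [← norms]
  simp only [trace_fin_three, mul_apply, transpose_apply, Fin.sum_univ_three, quatMat, of_apply,
    cons_val]
  ring

/-- The cosine of the rotation angle of `y⁻¹ * x`, for rotations `x` and `y`. -/
noncomputable def cosAngle (x y : Mat3) : ℝ := (trace (yᵀ * x) - 1) / 2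

lemma cosAngle_comm (x y : Mat3) : cosAngle x y = cosAngle y x := by
  rw [cosAngle, cosAngle, trace_transpose_mul_comm]

lemma cosAngle_self (hx : IsSO3 x) : cosAngle x x = 1 := by
  rw [cosAngle, hx.1, trace_one, Fintype.card_fin]
  norm_num

lemma cosAngle_eq_of_eq_quatMat {q : Fin 4 → ℝ} (hq : ∑ i, q i ^ 2 = 1)
    (hxy : yᵀ * x = quatMat q) : cosAngle x y = 2 * q 0 ^ 2 - 1 := by
  rw [cosAngle, hxy, trace_quatMat q hq]
  ring

lemma cosAngle_mem_Icc (hx : IsSO3 x) (hy : IsSO3 y) : cosAngle x y ∈ Set.Icc (-1 : ℝ) 1 := by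
  obtain ⟨q, hq, hxy⟩ := (hy.transpose.mul hx).exists_quat
  have q0_sq_le : q 0 ^ 2 ≤ 1 :=
    hq ▸ Finset.single_le_sum (fun i _ => sq_nonneg (q i)) (Finset.mem_univ 0)
  rw [cosAngle_eq_of_eq_quatMat hq hxy]
  exact ⟨by linarith [sq_nonneg (q 0)], by linarith⟩

lemma cos_rotAngle (hx : IsSO3 x) (hy : IsSO3 y) :
    Real.cos (rotAngle (y⁻¹ * x)) = cosAngle x y := by
  obtain ⟨lower, upper⟩ := cosAngle_mem_Icc hx hy
  rw [hy.inv_eq, rotAngle]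
  exact Real.cos_arccos lower upper

end Rotations

section Quaternions

open Matrix

variable {q : Fin 4 → ℝ}

lemma trace_quatMat_mul_Lgen (q : Fin 4 → ℝ) (i : Fin 3) :
    trace (quatMat q * Lgen i) = -(4 * (q 0 * q i.succ)) := by
  fin_cases i <;> simp [trace_fin_three, quatMat, Lgen] <;> ring

lemma trace_Lgen_transpose_mul_quatMat_mul_Lgen (q : Fin 4 → ℝ) (i j : Fin 3) :
    trace ((Lgen i)ᵀ * quatMat q * Lgen j) / 2 =
      (if i = j then q 0 ^ 2 else 0) - q i.succ * q j.succ - q 0 * ∑ k, eps3 i j k * q k.succ := by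
  fin_cases i <;> fin_cases j <;>
    simp [trace_fin_three, mul_apply, Fin.sum_univ_three, quatMat, Lgen, eps3] <;> ring

lemma sq_sum_eps3_mul_le (v : Fin 3 → ℝ) (i j : Fin 3) :
    (∑ k, eps3 i j k * v k) ^ 2 ≤ ∑ k, v k ^ 2 := by
  fin_cases i <;> fin_cases j <;> simp [Fin.sum_univ_three, eps3] <;>
    linarith [sq_nonneg (v 0), sq_nonneg (v 1), sq_nonneg (v 2)]

lemma sq_quat_succ_le (hq : ∑ i, q i ^ 2 = 1) (i : Fin 3) : q i.succ ^ 2 ≤ 1 - q 0 ^ 2 := by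
  rw [← hq, Fin.sum_univ_succ, add_sub_cancel_left]
  exact Finset.single_le_sum (fun k _ => sq_nonneg (q k.succ)) (Finset.mem_univ i)

lemma abs_quat_succ_mul_le (hq : ∑ i, q i ^ 2 = 1) (i j : Fin 3) :
    |q i.succ * q j.succ| ≤ 1 - q 0 ^ 2 := by
  rw [abs_mul]
  linarith [two_mul_le_add_sq |q i.succ| |q j.succ|, sq_abs (q i.succ), sq_abs (q j.succ),
    sq_quat_succ_le hq i, sq_quat_succ_le hq j]

lemma abs_ite_sub_quat_succ_mul_le (hq : ∑ i, q i ^ 2 = 1) (i j : Fin 3) :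
    |(if i = j then 1 - q 0 ^ 2 else 0) - q i.succ * q j.succ| ≤ 1 - q 0 ^ 2 := by
  split_ifs with hij
  · subst hij
    have := sq_quat_succ_le hq i
    rw [← sq, abs_of_nonneg (sub_nonneg.2 this)]
    exact sub_le_self _ (sq_nonneg _)
  · rw [zero_sub, abs_neg]
    exact abs_quat_succ_mul_le hq i j

/- The factor `1 - q 0 ^ 2`, the squared length of the imaginary part, turns the coefficient of
`q i.succ * q j.succ` into `-((1 - c ^ 2) * b - c * a)` with `c = 2 * q 0 ^ 2 - 1`. -/
lemma abs_mixed_quat_le (hq : ∑ i, q i ^ 2 = 1) (i j : Fin 3) {c : ℝ} (hc : c = 2 * q 0 ^ 2 - 1)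
    (a b : ℝ) :
    (1 - q 0 ^ 2) * |a * (trace ((Lgen i)ᵀ * quatMat q * Lgen j) / 2)
        - b * (2 * (q 0 * q i.succ)) * (2 * (q 0 * q j.succ))| ≤
      (1 - q 0 ^ 2) * (|(1 - c ^ 2) * b - c * a| + 2 * |a * q 0|) := by
  have hV : 0 ≤ 1 - q 0 ^ 2 := (sq_nonneg _).trans (sq_quat_succ_le hq 0)
  set S := ∑ k, eps3 i j k * q k.succ with hS
  set E := (if i = j then 1 - q 0 ^ 2 else 0) - q i.succ * q j.succ with hE
  have abs_q0_le : |q 0| ≤ 1 := (sq_le_one_iff_abs_le_one _).1 (by linarith)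
  have abs_S_le : |S| ≤ 1 := by
    rw [Fin.sum_univ_succ] at hq
    have := sq_sum_eps3_mul_le (fun k => q k.succ) i j
    exact (sq_le_one_iff_abs_le_one _).1 (by linarith [sq_nonneg (q 0)])
  have abs_le : |q 0 * E - (1 - q 0 ^ 2) * S| ≤ 2 * (1 - q 0 ^ 2) := by
    refine (abs_sub _ _).trans ?_
    rw [abs_mul, abs_mul, abs_of_nonneg hV, two_mul]
    exact add_le_add ((mul_le_of_le_one_left (abs_nonneg _) abs_q0_le).trans
      (abs_ite_sub_quat_succ_mul_le hq i j)) (mul_le_of_le_one_right hV abs_S_le)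
  calc (1 - q 0 ^ 2) * _
      = |-((1 - c ^ 2) * b - c * a) * (q i.succ * q j.succ)
          + a * q 0 * (q 0 * E - (1 - q 0 ^ 2) * S)| := by
        rw [← abs_of_nonneg hV, ← abs_mul, abs_of_nonneg hV,
          trace_Lgen_transpose_mul_quatMat_mul_Lgen, ← hS, hE, hc]
        congr 1
        split_ifs <;> ring
    _ ≤ |(1 - c ^ 2) * b - c * a| * (1 - q 0 ^ 2) + |a * q 0| * (2 * (1 - q 0 ^ 2)) := by
        refine (abs_add_le _ _).trans (add_le_add ?_ ?_)
        · rw [abs_mul, abs_neg]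
          gcongr
          exact abs_quat_succ_mul_le hq i j
        · rw [abs_mul]
          gcongr
    _ = (1 - q 0 ^ 2) * (|(1 - c ^ 2) * b - c * a| + 2 * |a * q 0|) := by ring

end Quaternions

section ZonalKernels

open Matrix Polynomial

variable {f : Mat3 → Mat3 → ℝ} {P : ℝ[X]} {x y : Mat3}

/-- `f` is the zonal kernel on SO(3) whose profile is the polynomial `P` in the cosine of the
rotation angle. -/
def IsZonal (f : Mat3 → Mat3 → ℝ) (P : ℝ[X]) : Prop :=
  ∀ ⦃x y⦄, IsSO3 x → IsSO3 y → f x y = P.eval (cosAngle x y)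

lemma isZonal_sigmaK (s N : ℕ) : IsZonal (sigmaK s N) (kernelPolynomial s N) :=
  fun x y hx hy => by rw [sigmaK, sigmaT_eq_eval_cos, cos_rotAngle hx hy]

lemma hasDerivAt_eval_cosAngle (P : ℝ[X]) (x y : Mat3) (j : Fin 3) :
    HasDerivAt (fun t : ℝ => P.eval (cosAngle (x * NormedSpace.exp (t • Lgen j)) y))
      (P.derivative.eval (cosAngle x y) * (trace (yᵀ * x * Lgen j) / 2)) 0 := by
  have cos_deriv : HasDerivAt (fun t : ℝ => cosAngle (x * NormedSpace.exp (t • Lgen j)) y)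
      (trace (yᵀ * x * Lgen j) / 2) 0 := by
    simpa only [cosAngle, Matrix.mul_assoc] using
      ((hasDerivAt_trace_mul_exp (yᵀ * x) (Lgen j)).sub_const 1).div_const 2
  have eval_deriv := (P.hasDerivAt _).comp (0 : ℝ) cos_deriv
  rwa [zero_smul, NormedSpace.exp_zero, mul_one] at eval_deriv

namespace IsZonal

lemma flip (hf : IsZonal f P) : IsZonal (fun x y => f y x) P :=
  fun x y hx hy => (hf hy hx).trans (by rw [cosAngle_comm])

lemma Xx_apply (hf : IsZonal f P) (hx : IsSO3 x) (hy : IsSO3 y) (j : Fin 3) :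
    Xx j f x y = P.derivative.eval (cosAngle x y) * (trace (yᵀ * x * Lgen j) / 2) := by
  rw [Xx, funext fun t : ℝ => hf (hx.mul (isSO3_exp_Lgen t j)) hy]
  exact (hasDerivAt_eval_cosAngle P x y j).deriv

lemma Xy_apply (hf : IsZonal f P) (hx : IsSO3 x) (hy : IsSO3 y) (i : Fin 3) :
    Xy i f x y = -(P.derivative.eval (cosAngle x y) * (trace (yᵀ * x * Lgen i) / 2)) := by
  have transpose_eq : xᵀ * y = (yᵀ * x)ᵀ := by rw [transpose_mul, transpose_transpose]
  refine (hf.flip.Xx_apply hy hx i).trans ?_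
  rw [cosAngle_comm, transpose_eq, trace_transpose_mul_skew (Lgen_transpose i)]
  ring

lemma Xx_Xy_apply (hf : IsZonal f P) (hx : IsSO3 x) (hy : IsSO3 y) (i j : Fin 3) :
    Xx j (Xy i f) x y =
      P.derivative.eval (cosAngle x y) * (trace ((Lgen i)ᵀ * (yᵀ * x) * Lgen j) / 2)
        - P.derivative.derivative.eval (cosAngle x y)
          * (trace (yᵀ * x * Lgen i) / 2) * (trace (yᵀ * x * Lgen j) / 2) := by
  have trace_deriv : HasDerivAt
      (fun t : ℝ => trace (yᵀ * (x * NormedSpace.exp (t • Lgen j)) * Lgen i) / 2)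
      (-(trace ((Lgen i)ᵀ * (yᵀ * x) * Lgen j) / 2)) 0 := by
    have := (hasDerivAt_trace_mul_exp (Lgen i * (yᵀ * x)) (Lgen j)).div_const 2
    simp only [Lgen_transpose, neg_mul, trace_neg, neg_div, neg_neg]
    refine this.congr_of_eventuallyEq (.of_forall fun t => ?_)
    beta_reduce
    rw [trace_mul_comm _ (Lgen i)]
    simp only [Matrix.mul_assoc]
  have product_deriv :=
    ((hasDerivAt_eval_cosAngle P.derivative x y j).mul trace_deriv).neg
  rw [Xx, funext fun t : ℝ => hf.Xy_apply (hx.mul (isSO3_exp_Lgen t j)) hy i]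
  refine product_deriv.deriv.trans ?_
  rw [zero_smul, NormedSpace.exp_zero, mul_one]
  ring

end IsZonal

lemma abs_trace_transpose_mul_Lgen_le (hx : IsSO3 x) (hy : IsSO3 y) (j : Fin 3) :
    |trace (yᵀ * x * Lgen j) / 2| ≤ √(1 - cosAngle x y ^ 2) := by
  obtain ⟨q, hq, hxy⟩ := (hy.transpose.mul hx).exists_quat
  rw [hxy, trace_quatMat_mul_Lgen, cosAngle_eq_of_eq_quatMat hq hxy]
  refine Real.abs_le_sqrt ?_
  calc (-(4 * (q 0 * q j.succ)) / 2) ^ 2 = 4 * q 0 ^ 2 * q j.succ ^ 2 := by ring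
    _ ≤ 4 * q 0 ^ 2 * (1 - q 0 ^ 2) := by gcongr; exact sq_quat_succ_le hq j
    _ = 1 - (2 * q 0 ^ 2 - 1) ^ 2 := by ring

namespace IsZonal

lemma abs_Xx_le (hf : IsZonal f P) (hx : IsSO3 x) (hy : IsSO3 y) (j : Fin 3) :
    |Xx j f x y| ≤ |P.derivative.eval (cosAngle x y)| * √(1 - cosAngle x y ^ 2) := by
  rw [hf.Xx_apply hx hy, abs_mul]
  gcongr
  exact abs_trace_transpose_mul_Lgen_le hx hy j

lemma abs_Xy_le (hf : IsZonal f P) (hx : IsSO3 x) (hy : IsSO3 y) (i : Fin 3) :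
    |Xy i f x y| ≤ |P.derivative.eval (cosAngle x y)| * √(1 - cosAngle x y ^ 2) := by
  rw [hf.Xy_apply hx hy, abs_neg, abs_mul]
  gcongr
  exact abs_trace_transpose_mul_Lgen_le hx hy i

lemma abs_Xx_Xy_le (hf : IsZonal f P) (hx : IsSO3 x) (hy : IsSO3 y) (i j : Fin 3) {r : ℝ}
    (hr : 0 < r) (hsep : r ^ 2 ≤ 2 - 2 * cosAngle x y) :
    |Xx j (Xy i f) x y| ≤
      |(1 - cosAngle x y ^ 2) * P.derivative.derivative.eval (cosAngle x y)
          - cosAngle x y * P.derivative.eval (cosAngle x y)|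
        + 2 / r * (|P.derivative.eval (cosAngle x y)| * √(1 - cosAngle x y ^ 2)) := by
  obtain ⟨q, hq, hxy⟩ := (hy.transpose.mul hx).exists_quat
  have hc := cosAngle_eq_of_eq_quatMat hq hxy
  have hV : r ^ 2 ≤ 4 * (1 - q 0 ^ 2) := by linarith
  have abs_q0_le : r * |q 0| ≤ √(1 - cosAngle x y ^ 2) := by
    rw [← abs_of_pos hr, ← abs_mul]
    refine Real.abs_le_sqrt ?_
    calc (r * q 0) ^ 2 = r ^ 2 * q 0 ^ 2 := mul_pow _ _ _
      _ ≤ 4 * (1 - q 0 ^ 2) * q 0 ^ 2 := by gcongr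
      _ = 1 - cosAngle x y ^ 2 := by rw [hc]; ring
  set a := P.derivative.eval (cosAngle x y)
  have mixed_le := le_of_mul_le_mul_left (abs_mixed_quat_le hq i j hc a
    (P.derivative.derivative.eval (cosAngle x y))) (by nlinarith)
  calc |Xx j (Xy i f) x y|
      ≤ |(1 - cosAngle x y ^ 2) * P.derivative.derivative.eval (cosAngle x y)
          - cosAngle x y * a| + 2 * |a * q 0| := by
        refine le_of_eq_of_le ?_ mixed_le
        rw [hf.Xx_Xy_apply hx hy, hxy, trace_quatMat_mul_Lgen, trace_quatMat_mul_Lgen]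
        congr 1
        ring
    _ = |(1 - cosAngle x y ^ 2) * P.derivative.derivative.eval (cosAngle x y)
          - cosAngle x y * a| + 2 / r * (|a| * (r * |q 0|)) := by
        rw [abs_mul]
        field_simp
    _ ≤ _ := by gcongr

end IsZonal

end ZonalKernels

section Packing

open MeasureTheory Module

variable {ι E : Type*} [NormedAddCommGroup E] [NormedSpace ℝ E] [FiniteDimensional ℝ E]

lemma card_le_of_separated (s : Finset ι) (v : ι → E) (o : E) {r R : ℝ} (hr : 0 < r)
    (hR : 0 ≤ R) (hsep : (s : Set ι).Pairwise fun i j => r ≤ dist (v i) (v j))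
    (hb : ∀ i ∈ s, dist (v i) o ≤ R) :
    (s.card : ℝ) ≤ (2 * (R / r) + 1) ^ finrank ℝ E := by
  borelize E
  let μ : Measure E := Measure.addHaar
  have hdisj : (s : Set ι).PairwiseDisjoint fun i => Metric.ball (v i) (r / 2) :=
    fun i hi j hj hij => Metric.ball_disjoint_ball <| by
      rw [add_halves]; exact hsep hi hj hij
  have hsub : (⋃ i ∈ s, Metric.ball (v i) (r / 2)) ⊆ Metric.ball o (R + r / 2) :=
    Set.iUnion₂_subset fun i hi => Metric.ball_subset_ball' (by linarith [hb i hi])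
  have hvol := measure_mono (μ := μ) hsub
  rw [measure_biUnion_finset hdisj fun _ _ => measurableSet_ball,
    Finset.sum_congr rfl fun i _ => Measure.addHaar_ball_of_pos μ (v i) (half_pos hr),
    Measure.addHaar_ball_of_pos μ o (by positivity), Finset.sum_const, nsmul_eq_mul,
    ← mul_assoc, ENNReal.mul_le_mul_iff_left (Metric.measure_ball_pos _ _ one_pos).ne'
      measure_ball_lt_top.ne, ← ENNReal.ofReal_natCast, ← ENNReal.ofReal_mul (by positivity),
    ENNReal.ofReal_le_ofReal_iff (by positivity)] at hvol
  rw [show R + r / 2 = (2 * (R / r) + 1) * (r / 2) by field_simp, mul_pow] at hvol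
  exact le_of_mul_le_mul_right hvol (by positivity)

variable [Fintype ι] [DecidableEq ι] {v : ι → E} {r : ℝ}

lemma card_filter_dist_le (hr : 0 < r) (hsep : Pairwise fun i j => r ≤ dist (v i) (v j)) (a : ι)
    {t : ℝ} (ht : 0 ≤ t) :
    (((Finset.univ.erase a).filter fun b => dist (v b) (v a) / r ≤ t).card : ℝ) ≤
      (2 * t + 1) ^ finrank ℝ E - 1 := by
  set s := (Finset.univ.erase a).filter fun b => dist (v b) (v a) / r ≤ t with hs
  have ha : a ∉ s := by simp [hs]
  have hb : ∀ b ∈ insert a s, dist (v b) (v a) ≤ t * r := fun b hb => by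
    rcases Finset.mem_insert.1 hb with rfl | hb
    · rw [dist_self]; positivity
    · exact (div_le_iff₀ hr).1 (Finset.mem_filter.1 hb).2
  have h := card_le_of_separated _ v (v a) hr (by positivity) (hsep.set_pairwise _) hb
  rw [Finset.card_insert_of_notMem ha, mul_div_cancel_right₀ _ hr.ne'] at h
  push_cast at h
  linarith

end Packing

section LayerCake

open MeasureTheory Module Set

variable {ι : Type*}

lemma inv_pow_succ_eq_rpow {t : ℝ} (ht : 0 < t) (m : ℕ) :
    (t ^ (m + 1))⁻¹ = t ^ (-((m : ℝ) + 1)) := by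
  rw [Real.rpow_neg ht.le, ← Real.rpow_natCast]; push_cast; rfl

lemma integrableOn_Ioi_inv_pow_succ {m : ℕ} (hm : m ≠ 0) {a : ℝ} (ha : 0 < a) :
    IntegrableOn (fun t : ℝ => (t ^ (m + 1))⁻¹) (Ioi a) := by
  have hm' : (0 : ℝ) < m := by positivity
  exact (integrableOn_Ioi_rpow_of_lt (by linarith : -((m : ℝ) + 1) < -1) ha).congr_fun
    (fun t ht => (inv_pow_succ_eq_rpow (ha.trans ht) m).symm) measurableSet_Ioi

lemma integral_Ioi_inv_pow_succ {m : ℕ} (hm : m ≠ 0) {a : ℝ} (ha : 0 < a) :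
    ∫ t in Ioi a, (t ^ (m + 1))⁻¹ = (m * a ^ m)⁻¹ := by
  have hm' : (0 : ℝ) < m := by positivity
  rw [setIntegral_congr_fun measurableSet_Ioi fun t ht => inv_pow_succ_eq_rpow (ha.trans ht) m,
    integral_Ioi_rpow_of_lt (by linarith) ha, show -((m : ℝ) + 1) + 1 = -m by ring,
    Real.rpow_neg ha.le, Real.rpow_natCast, neg_div_neg_eq, mul_inv, div_eq_inv_mul]

lemma inv_pow_eq_integral_indicator {p : ℕ} (hp : p ≠ 0) {y : ℝ} (hy : 1 ≤ y) :
    (y ^ p)⁻¹ = ∫ t in Ioi (1 : ℝ), (Ioi y).indicator (fun t => p * (t ^ (p + 1))⁻¹) t := by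
  have hy0 : 0 < y := by linarith
  rw [setIntegral_indicator measurableSet_Ioi,
    inter_eq_self_of_subset_right (Ioi_subset_Ioi hy), integral_const_mul,
    integral_Ioi_inv_pow_succ hp hy0, mul_inv, mul_inv_cancel_left₀ (by positivity)]

lemma sum_indicator_Ioi_le (s : Finset ι) (y : ι → ℝ) (g : ℝ → ℝ) {t : ℝ} (hg : 0 ≤ g t) :
    ∑ i ∈ s, (Ioi (y i)).indicator g t ≤ (s.filter fun i => y i ≤ t).card * g t := by
  rw [← nsmul_eq_mul, ← Finset.sum_const, Finset.sum_filter]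
  refine Finset.sum_le_sum fun i _ => ?_
  by_cases h : y i < t
  · rw [indicator_of_mem (mem_Ioi.2 h), if_pos h.le]
  · rw [indicator_of_notMem (by simpa using h)]
    split_ifs <;> simp [hg]

-- Layer cake: `y⁻ᵖ` is the integral of `p t⁻ᵖ⁻¹` over `t > y`, so summing over `i` turns the
-- integrand into the counting function.
lemma sum_inv_pow_le_of_card_le (s : Finset ι) {y : ι → ℝ} (hy : ∀ i ∈ s, 1 ≤ y i) {p : ℕ}
    (hp : p ≠ 0) {J : Finset ℕ} (hJ : ∀ j ∈ J, j < p) {c : ℕ → ℝ}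
    (hcard : ∀ t : ℝ, 1 ≤ t → ((s.filter fun i => y i ≤ t).card : ℝ) ≤ ∑ j ∈ J, c j * t ^ j) :
    ∑ i ∈ s, (y i ^ p)⁻¹ ≤ ∑ j ∈ J, c j * (p / (p - j)) := by
  let g : ℝ → ℝ := fun t => p * (t ^ (p + 1))⁻¹
  let G : ℕ → ℝ → ℝ := fun j t => c j * p * (t ^ (p - j + 1))⁻¹
  have hpj : ∀ j ∈ J, p - j ≠ 0 := fun j hj => (Nat.sub_pos_of_lt (hJ j hj)).ne'
  have hgI : ∀ i ∈ s, IntegrableOn ((Ioi (y i)).indicator g) (Ioi 1) := fun i _ =>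
    ((integrableOn_Ioi_inv_pow_succ hp one_pos).const_mul _).indicator measurableSet_Ioi
  have hGI : ∀ j ∈ J, IntegrableOn (G j) (Ioi 1) := fun j hj =>
    (integrableOn_Ioi_inv_pow_succ (hpj j hj) one_pos).const_mul _
  have hle : ∀ t ∈ Ioi (1 : ℝ), ∑ i ∈ s, (Ioi (y i)).indicator g t ≤ ∑ j ∈ J, G j t := by
    intro t ht
    have ht0 : 0 < t := one_pos.trans ht
    have hg : 0 ≤ g t := by positivity
    calc _ ≤ (s.filter fun i => y i ≤ t).card * g t := sum_indicator_Ioi_le s y g hg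
      _ ≤ (∑ j ∈ J, c j * t ^ j) * g t := by gcongr; exact hcard t (le_of_lt ht)
      _ = ∑ j ∈ J, G j t := by
        rw [Finset.sum_mul]
        refine Finset.sum_congr rfl fun j hj => ?_
        have hexp : p + 1 = j + (p - j + 1) := by have := hJ j hj; omega
        simp only [g, G]
        rw [hexp, pow_add]
        field_simp
  calc ∑ i ∈ s, (y i ^ p)⁻¹
      = ∫ t in Ioi (1 : ℝ), ∑ i ∈ s, (Ioi (y i)).indicator g t := by
        rw [integral_finsetSum _ hgI]
        exact Finset.sum_congr rfl fun i hi => inv_pow_eq_integral_indicator hp (hy i hi)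
    _ ≤ ∫ t in Ioi (1 : ℝ), ∑ j ∈ J, G j t :=
        setIntegral_mono_on (integrable_finsetSum _ hgI) (integrable_finsetSum _ hGI)
          measurableSet_Ioi hle
    _ = ∑ j ∈ J, c j * (p / (p - j)) := by
        rw [integral_finsetSum _ hGI]
        refine Finset.sum_congr rfl fun j hj => ?_
        rw [integral_const_mul, integral_Ioi_inv_pow_succ (hpj j hj) one_pos, one_pow, mul_one,
          Nat.cast_sub (hJ j hj).le, mul_assoc, div_eq_mul_inv]

lemma two_mul_add_one_pow_sub_one (d : ℕ) (t : ℝ) :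
    (2 * t + 1) ^ d - 1 = ∑ j ∈ Finset.Ico 1 (d + 1), (d.choose j * 2 ^ j : ℝ) * t ^ j := by
  rw [add_pow, Finset.sum_range_eq_add_Ico _ d.succ_pos]
  simp only [pow_zero, one_pow, mul_one, Nat.choose_zero_right, Nat.cast_one, add_sub_cancel_left]
  exact Finset.sum_congr rfl fun j _ => by ring

lemma sum_inv_pow_dist_div_le [Fintype ι] [DecidableEq ι] {E : Type*} [NormedAddCommGroup E]
    [NormedSpace ℝ E] [FiniteDimensional ℝ E] {v : ι → E} {r : ℝ} (hr : 0 < r)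
    (hsep : Pairwise fun i j => r ≤ dist (v i) (v j)) {p : ℕ} (hp : finrank ℝ E < p) (a : ι) :
    ∑ b ∈ Finset.univ.erase a, ((dist (v b) (v a) / r) ^ p)⁻¹ ≤
      ∑ j ∈ Finset.Ico 1 (finrank ℝ E + 1),
        ((finrank ℝ E).choose j * 2 ^ j : ℝ) * (p / (p - j)) := by
  refine sum_inv_pow_le_of_card_le _ (fun b hb => ?_) (by omega)
    (fun j hj => by have := (Finset.mem_Ico.1 hj).2; omega) fun t ht => ?_
  · rw [one_le_div₀ hr]
    exact hsep (Finset.ne_of_mem_erase hb)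
  · rw [← two_mul_add_one_pow_sub_one]
    exact card_filter_dist_le hr hsep a (by linarith)

end LayerCake

section Lift

lemma cosAngle_le_cos {x y : Mat3} (hx : IsSO3 x) (hy : IsSO3 y) {θ : ℝ} (hθ : 0 ≤ θ)
    (h : θ ≤ rotAngle (y⁻¹ * x)) : cosAngle x y ≤ Real.cos θ := by
  rw [← cos_rotAngle hx hy]
  exact Real.cos_le_cos_of_nonneg_of_le_pi hθ (Real.arccos_le_pi _) h

lemma exists_hemisphere_lift {ι : Type*} (x : ι → Mat3) (hx : ∀ b, IsSO3 (x b)) (a : ι) :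
    ∃ v : ι → EuclideanSpace ℝ (Fin 4), (∀ b, ‖v b‖ = 1) ∧ (∀ b, 0 ≤ inner ℝ (v b) (v a)) ∧
      ∀ b c, cosAngle (x b) (x c) = 2 * inner ℝ (v b) (v c) ^ 2 - 1 := by
  choose q hq hxq using fun b => (hx b).exists_quat
  let Q : ι → EuclideanSpace ℝ (Fin 4) := fun b => WithLp.toLp 2 (q b)
  have hQ : ∀ b, ‖Q b‖ = 1 := fun b => by
    rw [EuclideanSpace.norm_eq, Real.sqrt_eq_one]
    simpa [Q] using hq b
  have hc : ∀ b c, cosAngle (x b) (x c) = 2 * inner ℝ (Q b) (Q c) ^ 2 - 1 := fun b c => by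
    have hI : inner ℝ (Q b) (Q c) = ∑ i, q c i * q b i := by simp [Q, PiLp.inner_apply]
    rw [hI, cosAngle, hxq b, hxq c, trace_quatMat_transpose_mul _ _ (hq c) (hq b)]
    ring
  let e : ι → ℝ := fun b => if 0 ≤ inner ℝ (Q b) (Q a) then 1 else -1
  have he : ∀ b, e b ^ 2 = 1 := fun b => by
    simp only [e]; split_ifs <;> norm_num
  have hea : e a = 1 := if_pos real_inner_self_nonneg
  refine ⟨fun b => e b • Q b, fun b => ?_, fun b => ?_, fun b c => ?_⟩
  · rw [norm_smul, hQ, mul_one, Real.norm_eq_abs, ← Real.sqrt_sq_eq_abs, he, Real.sqrt_one]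
  · simp only [hea, one_smul, real_inner_smul_left, e]
    split_ifs with h <;> linarith
  · rw [hc, real_inner_smul_left, real_inner_smul_right, mul_pow, mul_pow, he, he]
    ring

section Chord

variable {F : Type*} [NormedAddCommGroup F] [InnerProductSpace ℝ F] {v w : F}

lemma dist_sq_of_norm_eq_one (hv : ‖v‖ = 1) (hw : ‖w‖ = 1) :
    dist v w ^ 2 = 2 - 2 * inner ℝ v w := by
  rw [dist_eq_norm, norm_sub_sq_real, hv, hw]; ring

lemma two_mul_sin_le_dist (hv : ‖v‖ = 1) (hw : ‖w‖ = 1) {φ : ℝ} (hφ : 0 ≤ φ) (hφ' : φ ≤ π / 4)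
    (h : 2 * inner ℝ v w ^ 2 - 1 ≤ Real.cos (4 * φ)) : 2 * Real.sin φ ≤ dist v w := by
  have hcos : 0 ≤ Real.cos (2 * φ) :=
    Real.cos_nonneg_of_neg_pi_div_two_le_of_le (by linarith [Real.pi_pos]) (by linarith)
  have hinner : inner ℝ v w ≤ Real.cos (2 * φ) := by
    rw [show 4 * φ = 2 * (2 * φ) by ring, Real.cos_two_mul] at h
    exact le_of_abs_le (abs_le_of_sq_le_sq (by linarith) hcos)
  refine le_of_sq_le_sq ?_ dist_nonneg
  rw [dist_sq_of_norm_eq_one hv hw]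
  linarith [Real.cos_two_mul φ, Real.sin_sq_add_cos_sq φ]

end Chord

lemma mul_le_sin {t : ℝ} (ht : 0 < t) (ht' : t ≤ 3 / 7) : 17 / 18 * t ≤ Real.sin t := by
  have hsq : t * t ≤ 3 / 7 * (3 / 7) := mul_le_mul ht' ht' ht.le (by norm_num)
  nlinarith [Real.sin_gt_sub_cube ht, mul_le_mul_of_nonneg_left hsq ht.le]

variable {ι : Type*} {x : ι → Mat3} {k : ℝ}

lemma exists_separated_lift (hk : 21 ≤ k) (hx : ∀ b, IsSO3 (x b))
    (hsep : ∀ b c, b ≠ c → 36 / k ≤ rotAngle ((x c)⁻¹ * x b)) (a : ι) :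
    ∃ v : ι → EuclideanSpace ℝ (Fin 4), (Pairwise fun b c => 17 / k ≤ dist (v b) (v c)) ∧
      ∀ b, dist (v b) (v a) ^ 2 ≤ 2 ∧
        2 - 2 * cosAngle (x a) (x b) = dist (v b) (v a) ^ 2 * (4 - dist (v b) (v a) ^ 2) := by
  obtain ⟨v, hv, hva, hvc⟩ := exists_hemisphere_lift x hx a
  have hk0 : 0 < k := by linarith
  refine ⟨v, fun b c hbc => ?_, fun b => ?_⟩
  · have h36 : 36 / k = 4 * (9 / k) := by ring
    have h37 : 9 / k ≤ 3 / 7 := by rw [div_le_div_iff₀ hk0 (by norm_num)]; linarith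
    have hcos := cosAngle_le_cos (hx b) (hx c) (by positivity) (hsep b c hbc)
    rw [hvc, h36] at hcos
    calc 17 / k = 2 * (17 / 18 * (9 / k)) := by ring
      _ ≤ 2 * Real.sin (9 / k) := by gcongr; exact mul_le_sin (by positivity) h37
      _ ≤ dist (v b) (v c) := two_mul_sin_le_dist (hv b) (hv c) (by positivity)
          (by linarith [Real.pi_gt_three]) hcos
  · rw [hvc, real_inner_comm, dist_sq_of_norm_eq_one (hv b) (hv a)]
    exact ⟨by linarith [hva b], by ring⟩

lemma sq_le_two_sub_two_mul_cosAngle (hk : 21 ≤ k) (hx : ∀ b, IsSO3 (x b))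
    (hsep : ∀ b c, b ≠ c → 36 / k ≤ rotAngle ((x c)⁻¹ * x b)) {a b : ι} (hab : b ≠ a) :
    (24 / k) ^ 2 ≤ 2 - 2 * cosAngle (x a) (x b) := by
  obtain ⟨v, hv, hva⟩ := exists_separated_lift hk hx hsep a
  obtain ⟨hle, heq⟩ := hva b
  have : 0 < k := by linarith
  have h17 : (17 / k) ^ 2 ≤ dist (v b) (v a) ^ 2 := by gcongr; exact hv hab
  calc (24 / k) ^ 2 ≤ (17 / k) ^ 2 * 2 := by
        rw [div_pow, div_pow, div_mul_eq_mul_div]; gcongr; norm_num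
    _ ≤ dist (v b) (v a) ^ 2 * (4 - dist (v b) (v a) ^ 2) := by gcongr; linarith
    _ = _ := heq.symm

lemma inv_pow_four_le {e : ℝ} (he : 0 < e) (he2 : e ^ 2 ≤ 2) :
    ((e ^ 2 * (4 - e ^ 2)) ^ 4)⁻¹ ≤ 1 / 256 * ((e ^ 8)⁻¹ + 7.5 * (e ^ 6)⁻¹) := by
  set t := e ^ 2 with ht
  have ht0 : 0 < t := by positivity
  have h4 : 0 < 4 - t := by linarith
  have key : 256 ≤ (1 + 7.5 * t) * (4 - t) ^ 4 := by
    have h1 : 0 ≤ 832 - 496 * t + 104 * t ^ 2 - 7.5 * t ^ 3 := by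
      nlinarith [mul_nonneg (sq_nonneg t) (sub_nonneg.2 he2)]
    nlinarith [mul_nonneg (mul_nonneg ht0.le (sub_nonneg.2 he2)) h1]
  rw [show e ^ 8 = t ^ 4 by rw [ht]; ring, show e ^ 6 = t ^ 3 by rw [ht]; ring, mul_pow]
  calc (t ^ 4 * (4 - t) ^ 4)⁻¹ = 256 / (256 * (t ^ 4 * (4 - t) ^ 4)) := by field_simp
    _ ≤ (1 + 7.5 * t) * (4 - t) ^ 4 / (256 * (t ^ 4 * (4 - t) ^ 4)) := by gcongr
    _ = _ := by field_simp

lemma sum_inv_pow_two_sub_two_mul_cosAngle_le [Fintype ι] [DecidableEq ι] (hk : 21 ≤ k)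
    (hx : ∀ b, IsSO3 (x b)) (hsep : ∀ b c, b ≠ c → 36 / k ≤ rotAngle ((x c)⁻¹ * x b)) (a : ι) :
    ∑ b ∈ Finset.univ.erase a, ((2 - 2 * cosAngle (x a) (x b)) ^ 4)⁻¹ ≤
      504 / 10 ^ 12 * k ^ 8 := by
  obtain ⟨v, hv, hva⟩ := exists_separated_lift hk hx hsep a
  have hk0 : 0 < k := by linarith
  have hr : 0 < 17 / k := by positivity
  let y : ι → ℝ := fun b => dist (v b) (v a) / (17 / k)
  have hterm : ∀ b ∈ Finset.univ.erase a, ((2 - 2 * cosAngle (x a) (x b)) ^ 4)⁻¹ ≤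
      1 / 256 * (k ^ 8 / 17 ^ 8) * (y b ^ 8)⁻¹ + 7.5 / 256 * (k ^ 6 / 17 ^ 6) * (y b ^ 6)⁻¹ := by
    intro b hb
    obtain ⟨hle, heq⟩ := hva b
    have hpos : 0 < dist (v b) (v a) := hr.trans_le (hv (Finset.ne_of_mem_erase hb))
    rw [heq]
    refine (inv_pow_four_le hpos hle).trans_eq ?_
    simp only [y]
    field_simp
  have h8 : ∑ b ∈ Finset.univ.erase a, (y b ^ 8)⁻¹ ≤ 4352 / 35 :=
    (sum_inv_pow_dist_div_le hr hv (by simp) a).trans_eq <| by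
      norm_num [Finset.sum_Ico_eq_sum_range, Finset.sum_range_succ, Nat.choose]
  have h6 : ∑ b ∈ Finset.univ.erase a, (y b ^ 6)⁻¹ ≤ 788 / 5 :=
    (sum_inv_pow_dist_div_le hr hv (by simp) a).trans_eq <| by
      norm_num [Finset.sum_Ico_eq_sum_range, Finset.sum_range_succ, Nat.choose]
  have hk6 : k ^ 6 ≤ k ^ 8 / 21 ^ 2 := by
    rw [le_div_iff₀ (by norm_num), show k ^ 8 = k ^ 6 * k ^ 2 by ring]
    gcongr
  calc _ ≤ _ := Finset.sum_le_sum hterm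
    _ = 1 / 256 * (k ^ 8 / 17 ^ 8) * ∑ b ∈ Finset.univ.erase a, (y b ^ 8)⁻¹ +
        7.5 / 256 * (k ^ 6 / 17 ^ 6) * ∑ b ∈ Finset.univ.erase a, (y b ^ 6)⁻¹ := by
      rw [Finset.sum_add_distrib, ← Finset.mul_sum, ← Finset.mul_sum]
    _ ≤ 1 / 256 * (k ^ 8 / 17 ^ 8) * (4352 / 35) +
        7.5 / 256 * (k ^ 8 / 21 ^ 2 / 17 ^ 6) * (788 / 5) := by gcongr
    _ ≤ _ := by linarith [pow_pos hk0 8]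

end Lift

section BlockDominance

lemma det_ne_zero_of_weighted_sum_row_lt_diag {n : Type*} [Fintype n] [DecidableEq n]
    {A : Matrix n n ℝ} {w : n → ℝ} (hw : ∀ i, 0 < w i)
    (h : ∀ i, ∑ j ∈ Finset.univ.erase i, |A i j| * w j < |A i i| * w i) : A.det ≠ 0 := by
  have hdet : (A * Matrix.diagonal w).det ≠ 0 :=
    det_ne_zero_of_sum_row_lt_diag fun i => by
      simpa only [Matrix.mul_diagonal, Real.norm_eq_abs, abs_mul, abs_of_pos (hw _)] using h i
  rw [Matrix.det_mul] at hdet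
  exact left_ne_zero_of_mul hdet

lemma isUnit_of_weighted_block_row_sum_lt {m n : Type*} [Fintype m] [DecidableEq m] [Fintype n]
    [DecidableEq n] {A : Matrix (m × n) (m × n) ℝ} {w : m → ℝ} (hw : ∀ p, 0 < w p)
    (hdiag : ∀ a p q, q ≠ p → A (p, a) (q, a) = 0)
    (h : ∀ a p, ∑ b ∈ Finset.univ.erase a, ∑ q, |A (p, a) (q, b)| * w q <
      |A (p, a) (p, a)| * w p) : IsUnit A := by
  refine (Matrix.isUnit_iff_isUnit_det A).2 (isUnit_iff_ne_zero.2 ?_)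
  refine det_ne_zero_of_weighted_sum_row_lt_diag (w := fun i => w i.1) (fun i => hw i.1) ?_
  rintro ⟨p, a⟩
  refine lt_of_eq_of_lt ?_ (h a p)
  rw [← Finset.sum_product_right' Finset.univ (Finset.univ.erase a)
    fun q b => |A (p, a) (q, b)| * w q]
  refine (Finset.sum_subset (fun i hi => ?_) fun i hi hi' => ?_).symm
  · rw [Finset.mem_erase]
    exact ⟨fun hip => by simp [hip] at hi, Finset.mem_univ i⟩
  · obtain ⟨q, b⟩ := i
    obtain rfl : b = a := by simpa using hi'
    rw [hdiag b p q fun hqp => by simp [hqp] at hi, abs_zero, zero_mul]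

end BlockDominance

section KernelBlocks

open Matrix Polynomial

variable {N : ℕ} {x y : Mat3}

lemma toOp_succ (i : Fin 3) : toOp i.succ = some i := by fin_cases i <;> rfl

lemma Kblock_zero_zero (s N : ℕ) : Kblock s N 0 0 = sigmaK s N := rfl

lemma Kblock_zero_succ (s N : ℕ) (j : Fin 3) : Kblock s N 0 j.succ = Xx j (sigmaK s N) := by
  fin_cases j <;> rfl

lemma Kblock_succ_zero (s N : ℕ) (i : Fin 3) : Kblock s N i.succ 0 = Xy i (sigmaK s N) := by
  fin_cases i <;> rfl

lemma Kblock_succ_succ (s N : ℕ) (i j : Fin 3) :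
    Kblock s N i.succ j.succ = Xx j (Xy i (sigmaK s N)) := by
  simp only [Kblock, toOp_succ]

lemma trace_Lgen (i : Fin 3) : trace (Lgen i) = 0 := by
  fin_cases i <;> simp [trace_fin_three, Lgen]

lemma trace_Lgen_transpose_mul_Lgen (i j : Fin 3) :
    trace ((Lgen i)ᵀ * Lgen j) = if i = j then 2 else 0 := by
  fin_cases i <;> fin_cases j <;>
    simp [trace_fin_three, mul_apply, Fin.sum_univ_three, Lgen] <;> norm_num

namespace IsZonal

variable {f : Mat3 → Mat3 → ℝ} {P : ℝ[X]}

lemma apply_self (hf : IsZonal f P) (hx : IsSO3 x) : f x x = P.eval 1 := by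
  rw [hf hx hx, cosAngle_self hx]

lemma Xx_apply_self (hf : IsZonal f P) (hx : IsSO3 x) (j : Fin 3) : Xx j f x x = 0 := by
  rw [hf.Xx_apply hx hx, hx.1, one_mul, trace_Lgen, zero_div, mul_zero]

lemma Xy_apply_self (hf : IsZonal f P) (hx : IsSO3 x) (i : Fin 3) : Xy i f x x = 0 := by
  rw [hf.Xy_apply hx hx, hx.1, one_mul, trace_Lgen, zero_div, mul_zero, neg_zero]

lemma Xx_Xy_apply_self (hf : IsZonal f P) (hx : IsSO3 x) (i j : Fin 3) :
    Xx j (Xy i f) x x = if i = j then P.derivative.eval 1 else 0 := by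
  rw [hf.Xx_Xy_apply hx hx, cosAngle_self hx, hx.1, mul_one, one_mul, one_mul, trace_Lgen,
    trace_Lgen, trace_Lgen_transpose_mul_Lgen]
  split_ifs <;> ring

end IsZonal

lemma Kblock_apply_self_of_ne (s N : ℕ) (hx : IsSO3 x) {p q : Fin 4} (hqp : q ≠ p) :
    Kblock s N p q x x = 0 := by
  have hf := isZonal_sigmaK s N
  cases p using Fin.cases with
  | zero =>
    obtain ⟨j, rfl⟩ := Fin.exists_succ_eq.2 hqp
    rw [Kblock_zero_succ, hf.Xx_apply_self hx]
  | succ i =>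
    cases q using Fin.cases with
    | zero => rw [Kblock_succ_zero, hf.Xy_apply_self hx]
    | succ j =>
      rw [Kblock_succ_succ, hf.Xx_Xy_apply_self hx, if_neg fun hij => hqp (by rw [hij])]

lemma abs_sigmaK_decay (hN : 20 ≤ N) (hx : IsSO3 x) (hy : IsSO3 y) :
    ((N : ℝ) + 1) ^ 8 * ((2 - 2 * cosAngle x y) ^ 4 * |sigmaK 8 N x y|) ≤ 5200000 := by
  rw [isZonal_sigmaK 8 N hx hy]
  exact eval_kernelPolynomial_decay hN (cosAngle_mem_Icc hx hy)

lemma abs_Xx_sigmaK_decay (hN : 20 ≤ N) (hx : IsSO3 x) (hy : IsSO3 y) (j : Fin 3) :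
    ((N : ℝ) + 1) ^ 8 * ((2 - 2 * cosAngle x y) ^ 4 * |Xx j (sigmaK 8 N) x y|) ≤
      10400000 * ((N : ℝ) + 1) :=
  le_trans (by gcongr; exact (isZonal_sigmaK 8 N).abs_Xx_le hx hy j)
    (eval_derivative_kernelPolynomial_decay hN (cosAngle_mem_Icc hx hy))

lemma abs_Xy_sigmaK_decay (hN : 20 ≤ N) (hx : IsSO3 x) (hy : IsSO3 y) (i : Fin 3) :
    ((N : ℝ) + 1) ^ 8 * ((2 - 2 * cosAngle x y) ^ 4 * |Xy i (sigmaK 8 N) x y|) ≤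
      10400000 * ((N : ℝ) + 1) :=
  le_trans (by gcongr; exact (isZonal_sigmaK 8 N).abs_Xy_le hx hy i)
    (eval_derivative_kernelPolynomial_decay hN (cosAngle_mem_Icc hx hy))

lemma abs_Xx_Xy_sigmaK_decay (hN : 20 ≤ N) (hx : IsSO3 x) (hy : IsSO3 y)
    (hsep : (24 / ((N : ℝ) + 1)) ^ 2 ≤ 2 - 2 * cosAngle x y) (i j : Fin 3) :
    ((N : ℝ) + 1) ^ 8 * ((2 - 2 * cosAngle x y) ^ 4 * |Xx j (Xy i (sigmaK 8 N)) x y|) ≤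
      24000000 * ((N : ℝ) + 1) ^ 2 := by
  have hc := cosAngle_mem_Icc hx hy
  have hmixed := (isZonal_sigmaK 8 N).abs_Xx_Xy_le hx hy i j (by positivity) hsep
  have h1 := eval_derivative_kernelPolynomial_decay hN hc
  have h2 := eval_derivative_two_kernelPolynomial_decay hN hc
  set k : ℝ := (N : ℝ) + 1
  have hk0 : 0 < k := by positivity
  set d := (2 - 2 * cosAngle x y) ^ 4
  have : 0 ≤ d := by positivity
  set D₁ := |(kernelPolynomial 8 N).derivative.eval (cosAngle x y)| * √(1 - cosAngle x y ^ 2)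
  set D₂ := |(1 - cosAngle x y ^ 2) * (kernelPolynomial 8 N).derivative.derivative.eval
    (cosAngle x y) - cosAngle x y * (kernelPolynomial 8 N).derivative.eval (cosAngle x y)|
  calc _ ≤ k ^ 8 * (d * (D₂ + 2 / (24 / k) * D₁)) := by gcongr
    _ = k ^ 8 * (d * D₂) + k / 12 * (k ^ 8 * (d * D₁)) := by field_simp; ring
    _ ≤ 23000000 * k ^ 2 + k / 12 * (10400000 * k) := by gcongr
    _ ≤ 24000000 * k ^ 2 := by nlinarith [sq_nonneg k]

end KernelBlocks

section InterpolationMatrix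

variable {N : ℕ} {x y : Mat3}

/-- Column weights for the diagonal dominance of the interpolation matrix: a derivative costs a
factor of order `N + 1`, which the weight of the derivative columns compensates. -/
noncomputable def colWeight (N : ℕ) : Fin 4 → ℝ := Fin.cons 1 fun _ => 20 / ((N : ℝ) + 1)

lemma colWeight_pos (N : ℕ) (p : Fin 4) : 0 < colWeight N p := by
  cases p using Fin.cases with
  | zero => exact one_pos
  | succ i => change (0 : ℝ) < 20 / ((N : ℝ) + 1); positivity

lemma sum_mul_colWeight (N : ℕ) (f : Fin 4 → ℝ) :
    ∑ q, f q * colWeight N q = f 0 + ∑ j : Fin 3, f j.succ * (20 / ((N : ℝ) + 1)) := by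
  simp [Fin.sum_univ_succ, colWeight]

lemma weighted_row_zero_le (hN : 20 ≤ N) (hx : IsSO3 x) (hy : IsSO3 y) :
    ((N : ℝ) + 1) ^ 8 *
      ((2 - 2 * cosAngle x y) ^ 4 * ∑ q, |Kblock 8 N 0 q x y| * colWeight N q) ≤ 629200000 := by
  have h0 := abs_sigmaK_decay hN hx hy
  have h1 := abs_Xx_sigmaK_decay hN hx hy
  rw [sum_mul_colWeight, ← Finset.sum_mul, Kblock_zero_zero]
  simp only [Kblock_zero_succ]
  set k : ℝ := (N : ℝ) + 1
  set d := (2 - 2 * cosAngle x y) ^ 4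
  calc _ = k ^ 8 * (d * |sigmaK 8 N x y|) +
        (∑ j, k ^ 8 * (d * |Xx j (sigmaK 8 N) x y|)) * (20 / k) := by
        rw [← Finset.mul_sum, ← Finset.mul_sum]; ring
    _ ≤ 5200000 + (∑ _j : Fin 3, 10400000 * k) * (20 / k) := by
        gcongr ?_ + (∑ _j, ?_) * _
        exact h1 _
    _ = 629200000 := by
        have hk : k ≠ 0 := by positivity
        rw [Fin.sum_const, nsmul_eq_mul]
        field_simp
        norm_num

lemma weighted_row_succ_le (hN : 20 ≤ N) (hx : IsSO3 x) (hy : IsSO3 y)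
    (hsep : (24 / ((N : ℝ) + 1)) ^ 2 ≤ 2 - 2 * cosAngle x y) (i : Fin 3) :
    ((N : ℝ) + 1) ^ 8 *
        ((2 - 2 * cosAngle x y) ^ 4 * ∑ q, |Kblock 8 N i.succ q x y| * colWeight N q) ≤
      1450400000 * ((N : ℝ) + 1) := by
  have h1 := abs_Xy_sigmaK_decay hN hx hy i
  have h2 := abs_Xx_Xy_sigmaK_decay hN hx hy hsep i
  rw [sum_mul_colWeight, ← Finset.sum_mul, Kblock_succ_zero]
  simp only [Kblock_succ_succ]
  set k : ℝ := (N : ℝ) + 1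
  set d := (2 - 2 * cosAngle x y) ^ 4
  calc _ = k ^ 8 * (d * |Xy i (sigmaK 8 N) x y|) +
        (∑ j, k ^ 8 * (d * |Xx j (Xy i (sigmaK 8 N)) x y|)) * (20 / k) := by
        rw [← Finset.mul_sum, ← Finset.mul_sum]; ring
    _ ≤ 10400000 * k + (∑ _j : Fin 3, 24000000 * k ^ 2) * (20 / k) := by
        gcongr ?_ + (∑ _j, ?_) * _
        exact h2 _
    _ = 1450400000 * k := by
        have hk : k ≠ 0 := by positivity
        rw [Fin.sum_const, nsmul_eq_mul]
        field_simp
        norm_num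

lemma sum_le_mul_sum_inv {ι : Type*} {s : Finset ι} {k C : ℝ} (hk : 0 < k) {d T : ι → ℝ}
    (hd : ∀ b ∈ s, 0 < d b) (h : ∀ b ∈ s, k * (d b * T b) ≤ C) :
    ∑ b ∈ s, T b ≤ C / k * ∑ b ∈ s, (d b)⁻¹ := by
  rw [Finset.mul_sum]
  refine Finset.sum_le_sum fun b hb => ?_
  rw [← div_eq_mul_inv, le_div_iff₀ (hd b hb), le_div_iff₀ hk]
  linarith [h b hb]

variable {M : ℕ} {x : Fin M → Mat3}

lemma sum_row_le (hN : 20 ≤ N) (hx : ∀ a, IsSO3 (x a))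
    (hsep : ∀ a b, a ≠ b → 36 / ((N : ℝ) + 1) ≤ rotAngle ((x b)⁻¹ * x a)) (a : Fin M) {C : ℝ}
    (hC : 0 ≤ C) {T : Fin M → ℝ}
    (hT : ∀ b ≠ a, ((N : ℝ) + 1) ^ 8 * ((2 - 2 * cosAngle (x a) (x b)) ^ 4 * T b) ≤ C) :
    ∑ b ∈ Finset.univ.erase a, T b ≤ 504 / 10 ^ 12 * C := by
  have hk : (21 : ℝ) ≤ (N : ℝ) + 1 := by
    have : (20 : ℝ) ≤ N := by exact_mod_cast hN
    linarith
  set k : ℝ := (N : ℝ) + 1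
  have : 0 < k := by linarith
  have hd : ∀ b ∈ Finset.univ.erase a, 0 < (2 - 2 * cosAngle (x a) (x b)) ^ 4 := fun b hb => by
    have hpos : 0 < (24 / k) ^ 2 := by positivity
    have := sq_le_two_sub_two_mul_cosAngle hk hx hsep (Finset.ne_of_mem_erase hb)
    exact pow_pos (hpos.trans_le this) 4
  calc _ ≤ C / k ^ 8 * ∑ b ∈ Finset.univ.erase a, ((2 - 2 * cosAngle (x a) (x b)) ^ 4)⁻¹ :=
        sum_le_mul_sum_inv (by positivity) hd fun b hb => hT b (Finset.ne_of_mem_erase hb)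
    _ ≤ C / k ^ 8 * (504 / 10 ^ 12 * k ^ 8) := by
        gcongr
        exact sum_inv_pow_two_sub_two_mul_cosAngle_le hk hx hsep a
    _ = 504 / 10 ^ 12 * C := by field_simp

lemma isUnit_Kmat (hN : 20 ≤ N) (hx : ∀ a, IsSO3 (x a))
    (hsep : ∀ a b, a ≠ b → 36 / ((N : ℝ) + 1) ≤ rotAngle ((x b)⁻¹ * x a)) :
    IsUnit (Kmat 8 N x) := by
  have hk : (21 : ℝ) ≤ (N : ℝ) + 1 := by
    have : (20 : ℝ) ≤ N := by exact_mod_cast hN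
    linarith
  have hf := isZonal_sigmaK 8 N
  refine isUnit_of_weighted_block_row_sum_lt (colWeight_pos N)
    (fun a p q hqp => Kblock_apply_self_of_ne 8 N (hx a) hqp) fun a p => ?_
  simp only [Kmat, Matrix.of_apply]
  cases p using Fin.cases with
  | zero =>
    rw [Kblock_zero_zero, hf.apply_self (hx a), eval_kernelPolynomial_one hN]
    refine (sum_row_le hN hx hsep a (by norm_num) fun b _ =>
      weighted_row_zero_le hN (hx a) (hx b)).trans_lt ?_
    norm_num [colWeight]
  | succ i =>
    rw [Kblock_succ_succ, hf.Xx_Xy_apply_self (hx a), if_pos rfl]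
    refine (sum_row_le hN hx hsep a (by positivity) fun b hb =>
      weighted_row_succ_le hN (hx a) (hx b)
        (sq_le_two_sub_two_mul_cosAngle hk hx hsep hb) i).trans_lt ?_
    set k : ℝ := (N : ℝ) + 1
    set D := (kernelPolynomial 8 N).derivative.eval 1
    have hD : 0.051 * k ^ 2 ≤ |D| :=
      (le_eval_derivative_kernelPolynomial_one hN).trans (le_abs_self D)
    calc 504 / 10 ^ 12 * (1450400000 * k) < 0.051 * k ^ 2 * (20 / k) := by
          field_simp; norm_num
      _ ≤ |D| * (20 / k) := by gcongr

end InterpolationMatrix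

theorem interpolation_problem_unique_solution_general
    (N : ℕ) (hN : 20 ≤ N)
    (M : ℕ) (x : Fin M → Mat3) (hx : ∀ a, IsSO3 (x a))
    (hsep : ∀ a b, a ≠ b → 36 / ((N : ℝ) + 1) ≤ rotAngle ((x b)⁻¹ * (x a))) :
    IsUnit (Kmat 8 N x) ∧
    ∀ v : Fin 4 × Fin M → ℝ, ∃! α : Fin 4 × Fin M → ℝ, (Kmat 8 N x).mulVec α = v := by
  have hK := isUnit_Kmat hN hx hsep
  exact ⟨hK, (Function.bijective_iff_existsUnique _).1
    ⟨Matrix.mulVec_injective_iff_isUnit.2 hK, Matrix.mulVec_surjective_iff_isUnit.2 hK⟩⟩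

theorem interpolation_problem_unique_solution
    (N : ℕ) (hN : 20 ≤ N)
    (M : ℕ) (x : Fin M → Mat3) (hx : ∀ a, IsSO3 (x a)) (hinj : Function.Injective x)
    (hsep : ∀ a b, a ≠ b → 36 / ((N : ℝ) + 1) ≤ rotAngle ((x b)⁻¹ * (x a))) :
    IsUnit (Kmat 8 N x) ∧
    ∀ u : Fin M → ℝ, (∀ i, u i = 1 ∨ u i = -1) →
      ∃! α : Fin 4 × Fin M → ℝ, (Kmat 8 N x).mulVec α = rhsVec u := by
  obtain ⟨hK, hv⟩ := interpolation_problem_unique_solution_general N hN M x hx hsep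
  exact ⟨hK, fun u _ => hv (rhsVec u)⟩
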